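/- arXiv:1406.0157 — 10 statements merged into one kernel-verified Lean document; each statement's English description precedes it below -/
import Mathlib

section
/- Let k ≥ 1 and n ≥ 1 be integers, and let W ⊆ (ZMod 2)^k be a set of nonzero vectors with |W| ≥ 2n². Then the number of vectors R ∈ (ZMod 2)^k that (1/(2√n))-split W is strictly greater than 2^k·(1 − 1/(2n)). -/
/-!
The character sum `F R = ∑ s ∈ W, (-1) ^ ⟨R, s⟩` equals `|W| - 2 |{s ∈ W : ⟨R, s⟩ = 1}|`, so `R`
ε-splits `W` exactly when `|F R| ≤ 2 ε |W|`. Orthogonality of the characters, which plays the role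
of the pairwise independence of the bits `⟨R, s⟩`, gives `∑ R, F R ^ 2 = 2 ^ k |W|`, and Chebyshev's
inequality bounds the number of `R` with `|F R| > 2 ε |W|`.
-/

open Finset

/-- Inner product over GF(2). -/
def ip {k : ℕ} (R s : Fin k → ZMod 2) : ZMod 2 := ∑ i, R i * s i

/-- `R` ε-splits the finite set `S`. -/
def splits {k : ℕ} (ε : ℝ) (R : Fin k → ZMod 2) (S : Finset (Fin k → ZMod 2)) : Prop :=
  (1 / 2 - ε) * (S.card : ℝ) ≤ ((S.filter fun s => ip R s = 1).card : ℝ) ∧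
  ((S.filter fun s => ip R s = 1).card : ℝ) ≤ (1 / 2 + ε) * (S.card : ℝ)

lemma card_filter_lt_abs_mul_sq_lt {α R : Type*} [Ring R] [LinearOrder R] [IsStrictOrderedRing R]
    {s : Finset α} {f : α → R} {a : R} (ha : 0 ≤ a) (hf : 0 < ∑ x ∈ s, f x ^ 2) :
    (#{x ∈ s | a < |f x|} : R) * a ^ 2 < ∑ x ∈ s, f x ^ 2 := by
  obtain hempty | hne := {x ∈ s | a < |f x|}.eq_empty_or_nonempty
  · simpa [hempty] using hf
  · calc (#{x ∈ s | a < |f x|} : R) * a ^ 2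
        = ∑ x ∈ s with a < |f x|, a ^ 2 := by rw [sum_const, nsmul_eq_mul]
      _ < ∑ x ∈ s with a < |f x|, f x ^ 2 :=
          sum_lt_sum_of_nonempty hne fun x hx =>
            sq_lt_sq.2 <| (abs_of_nonneg ha).trans_lt (mem_filter.1 hx).2
      _ ≤ ∑ x ∈ s, f x ^ 2 :=
          sum_le_sum_of_subset_of_nonneg (filter_subset _ _) fun x _ _ => sq_nonneg _

/-- The nontrivial additive character `x ↦ (-1) ^ x` of `ZMod 2`. It is real-valued, so that sums
of characters can be compared with cardinalities. -/
def signChar : AddChar (ZMod 2) ℝ := AddChar.zmodChar 2 (neg_one_sq (R := ℝ))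

lemma signChar_apply (x : ZMod 2) : signChar x = if x = 1 then -1 else 1 := by
  rw [signChar, AddChar.zmodChar_apply]
  obtain rfl | rfl : x = 0 ∨ x = 1 := by revert x; decide
  · simp
  · simp [ZMod.val_one]

lemma signChar_eq_one_iff {x : ZMod 2} : signChar x = 1 ↔ x = 0 := by
  have bit_ne_one : x ≠ 1 ↔ x = 0 := by revert x; decide
  rw [signChar_apply, ← bit_ne_one]
  split_ifs with h <;> norm_num [h]

section WalshChar

variable {ι : Type*} [Fintype ι]

/-- The Walsh character `R ↦ (-1) ^ ⟨R, s⟩` of `(ZMod 2) ^ ι`, whose sum over `s ∈ W` measures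
how evenly `R` splits `W`. -/
def walshChar (s : ι → ZMod 2) : AddChar (ι → ZMod 2) ℝ :=
  signChar.compAddMonoidHom (AddMonoidHom.mk' (· ⬝ᵥ s) fun R R' => add_dotProduct R R' s)

lemma walshChar_apply (s R : ι → ZMod 2) : walshChar s R = signChar (R ⬝ᵥ s) := rfl

lemma walshChar_add (s t : ι → ZMod 2) : walshChar (s + t) = walshChar s * walshChar t := by
  ext R
  simp only [AddChar.mul_apply, walshChar_apply, dotProduct_add, AddChar.map_add_eq_mul]

lemma walshChar_eq_zero_iff {s : ι → ZMod 2} : walshChar s = 0 ↔ s = 0 := by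
  simp_rw [AddChar.eq_zero_iff, walshChar_apply, signChar_eq_one_iff, dotProduct_comm _ s,
    dotProduct_eq_zero_iff]

lemma sum_walshChar_mul_walshChar [DecidableEq ι] (s t : ι → ZMod 2) :
    ∑ R, walshChar s R * walshChar t R = if s = t then 2 ^ Fintype.card ι else 0 := by
  have add_eq_zero_iff : s + t = 0 ↔ s = t := by simp [funext_iff, CharTwo.add_eq_zero]
  simp_rw [← AddChar.mul_apply, ← walshChar_add, AddChar.sum_eq_ite, walshChar_eq_zero_iff,
    add_eq_zero_iff, Fintype.card_fun, ZMod.card, Nat.cast_pow, Nat.cast_ofNat]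

lemma sum_sq_sum_walshChar [DecidableEq ι] (W : Finset (ι → ZMod 2)) :
    ∑ R, (∑ s ∈ W, walshChar s R) ^ 2 = 2 ^ Fintype.card ι * #W := by
  calc ∑ R, (∑ s ∈ W, walshChar s R) ^ 2
      = ∑ s ∈ W, ∑ t ∈ W, ∑ R, walshChar s R * walshChar t R := by
        simp_rw [sq, sum_mul_sum]
        rw [sum_comm]
        exact sum_congr rfl fun s _ => sum_comm
    _ = 2 ^ Fintype.card ι * #W := by
        simp [sum_walshChar_mul_walshChar, mul_comm]

lemma sum_walshChar_eq_card_sub (W : Finset (ι → ZMod 2)) (R : ι → ZMod 2) :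
    ∑ s ∈ W, walshChar s R = #W - 2 * #{s ∈ W | R ⬝ᵥ s = 1} := by
  have walshChar_eq (s : ι → ZMod 2) :
      walshChar s R = 1 - 2 * if R ⬝ᵥ s = 1 then 1 else 0 := by
    rw [walshChar_apply, signChar_apply]
    split_ifs <;> norm_num
  simp_rw [walshChar_eq, sum_sub_distrib, ← mul_sum, sum_boole, sum_const, nsmul_one]

end WalshChar

lemma splits_iff_abs_sum_walshChar_le {k : ℕ} {ε : ℝ} {R : Fin k → ZMod 2}
    {W : Finset (Fin k → ZMod 2)} :
    splits ε R W ↔ |∑ s ∈ W, walshChar s R| ≤ 2 * ε * #W := by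
  have sum_eq : ∑ s ∈ W, walshChar s R = #W - 2 * #{s ∈ W | ip R s = 1} :=
    sum_walshChar_eq_card_sub W R
  rw [splits, sum_eq, abs_le]
  constructor <;> rintro ⟨hlower, hupper⟩ <;> constructor <;> linarith

open scoped Classical in
lemma card_not_splits_mul_lt {k : ℕ} {ε : ℝ} (hε : 0 ≤ ε) {W : Finset (Fin k → ZMod 2)}
    (hW : W.Nonempty) :
    (#{R | ¬ splits ε R W} : ℝ) * (4 * ε ^ 2 * #W) < 2 ^ k := by
  have card_pos : (0 : ℝ) < #W := by exact_mod_cast hW.card_pos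
  have second_moment : ∑ R, (∑ s ∈ W, walshChar s R) ^ 2 = 2 ^ k * (#W : ℝ) := by
    rw [sum_sq_sum_walshChar, Fintype.card_fin]
  have not_splits_iff (R : Fin k → ZMod 2) :
      ¬ splits ε R W ↔ 2 * ε * #W < |∑ s ∈ W, walshChar s R| := by
    rw [splits_iff_abs_sum_walshChar_le, not_le]
  refine lt_of_mul_lt_mul_right ?_ card_pos.le
  calc (#{R | ¬ splits ε R W} : ℝ) * (4 * ε ^ 2 * #W) * (#W : ℝ)
      = #{R | 2 * ε * #W < |∑ s ∈ W, walshChar s R|} * (2 * ε * #W) ^ 2 := by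
        simp_rw [not_splits_iff]
        ring
    _ < ∑ R, (∑ s ∈ W, walshChar s R) ^ 2 :=
        card_filter_lt_abs_mul_sq_lt (by positivity) (by rw [second_moment]; positivity)
    _ = 2 ^ k * (#W : ℝ) := second_moment

open scoped Classical in
theorem stmt0_general {k : ℕ} {ε δ : ℝ} (hε : 0 ≤ ε) {W : Finset (Fin k → ZMod 2)}
    (hW : 1 ≤ 4 * ε ^ 2 * #W * δ) :
    2 ^ k * (1 - δ) < (#{R | splits ε R W} : ℝ) := by
  have W_nonempty : W.Nonempty := by
    rw [nonempty_iff_ne_empty]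
    rintro rfl
    norm_num at hW
  have δ_pos : 0 < δ := pos_of_mul_pos_right (one_pos.trans_le hW) (by positivity)
  have few_bad : (#{R | ¬ splits ε R W} : ℝ) < 2 ^ k * δ :=
    calc (#{R | ¬ splits ε R W} : ℝ)
        ≤ #{R | ¬ splits ε R W} * (4 * ε ^ 2 * #W * δ) :=
          le_mul_of_one_le_right (Nat.cast_nonneg _) hW
      _ = #{R | ¬ splits ε R W} * (4 * ε ^ 2 * #W) * δ := by ring
      _ < 2 ^ k * δ := mul_lt_mul_of_pos_right (card_not_splits_mul_lt hε W_nonempty) δ_pos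
  have good_add_bad :
      (#{R | splits ε R W} : ℝ) + #{R | ¬ splits ε R W} = 2 ^ k := by
    rw [← Nat.cast_add, card_filter_add_card_filter_not]
    simp
  linarith

open scoped Classical in
theorem stmt0 (k n : ℕ) (hk : 1 ≤ k) (hn : 1 ≤ n)
    (W : Finset (Fin k → ZMod 2)) (hW0 : ∀ s ∈ W, s ≠ 0)
    (hWcard : 2 * n ^ 2 ≤ W.card) :
    (2 : ℝ) ^ k * (1 - 1 / (2 * n)) <
      ((Finset.univ.filter fun R : Fin k → ZMod 2 =>
        splits (1 / (2 * Real.sqrt n)) R W).card : ℝ) := by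
  have hWcard' : (2 : ℝ) * n ^ 2 ≤ #W := by exact_mod_cast hWcard
  exact stmt0_general (by positivity) (by field_simp; norm_num; linarith)
end

section
/- Let k ≥ 1 be an integer and let S ⊆ (ZMod 2)^k be a nonempty set of nonzero vectors. Then at least 2^(k−1) of the vectors R ∈ (ZMod 2)^k (1/8)-elevate S. -/
/-!
Let `c g` be the number of members of a finite family of proper subgroups of a finite group that
miss `g`. A proper subgroup misses at least half of the group, so on average `c` is at least half
the size of the family, and some `g₀` attains this. As `c` is subadditive, for every `g` one of
`c g` and `c (-g + g₀)` is at least a quarter of the size of the family; since `g ↦ -g + g₀` is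
injective, this happens at `g` itself for at least half of all `g`. The theorem is the case of the
kernels of `⟨·, s⟩`, `s ∈ S`.
-/

open Finset

/-- `R` ε-elevates the finite set `S`. -/
def elevates {k : ℕ} (ε : ℝ) (R : Fin k → ZMod 2) (S : Finset (Fin k → ZMod 2)) : Prop :=
  ε * (S.card : ℝ) ≤ ((S.filter fun s => ip R s = 1).card : ℝ)

lemma card_le_two_mul_card_filter_of_injective {α : Type*} [Fintype α] {p : α → Prop}
    [DecidablePred p] {f : α → α} (hf : f.Injective) (h : ∀ x, p x ∨ p (f x)) :
    Fintype.card α ≤ 2 * #{x | p x} := by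
  have hle : #{x | ¬ p x} ≤ #{x | p x} :=
    card_le_card_of_injOn f (fun x hx ↦ by simpa using (h x).resolve_left (by simpa using hx))
      hf.injOn
  have hsum : #{x | p x} + #{x | ¬ p x} = Fintype.card α := card_filter_add_card_filter_not p
  omega

section AddGroup

variable {G : Type*} [AddGroup G]

lemma card_le_two_mul_card_le_of_subadditive [Fintype G] {M : Type*} [AddCommMonoid M]
    [LinearOrder M] [IsOrderedCancelAddMonoid M] {c : G → M}
    (hc : ∀ x y, c (x + y) ≤ c x + c y) {t : M} {g₀ : G} (hg₀ : t + t ≤ c g₀) :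
    Fintype.card G ≤ 2 * #{g | t ≤ c g} := by
  refine card_le_two_mul_card_filter_of_injective (f := fun g ↦ -g + g₀)
    ((add_left_injective g₀).comp neg_injective) fun g ↦ ?_
  have hsum : t + t ≤ c g + c (-g + g₀) :=
    calc t + t ≤ c g₀ := hg₀
      _ = c (g + (-g + g₀)) := by rw [add_neg_cancel_left]
      _ ≤ c g + c (-g + g₀) := hc _ _
  exact le_or_le_of_add_le_add hsum

lemma card_le_two_mul_card_notMem [Fintype G] {H : AddSubgroup G} [DecidablePred (· ∈ H)]
    (hH : H ≠ ⊤) : Fintype.card G ≤ 2 * #{g | g ∉ H} := by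
  obtain ⟨a, ha⟩ : ∃ a, a ∉ H := by simpa [AddSubgroup.eq_top_iff'] using hH
  refine card_le_two_mul_card_filter_of_injective (add_left_injective a) fun g ↦ ?_
  by_cases hg : g ∈ H
  · exact .inr (mt (H.add_mem_cancel_left hg).mp ha)
  · exact .inl hg

variable {ι : Type*} (S : Finset ι) {H : ι → AddSubgroup G} [∀ i, DecidablePred (· ∈ H i)]

lemma card_filter_add_notMem_le (x y : G) :
    #{i ∈ S | x + y ∉ H i} ≤ #{i ∈ S | x ∉ H i} + #{i ∈ S | y ∉ H i} := by
  classical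
  calc #{i ∈ S | x + y ∉ H i}
      ≤ #{i ∈ S | x ∉ H i ∨ y ∉ H i} := by
        refine card_le_card (monotone_filter_right S fun i _ hxy ↦ ?_)
        by_contra! h
        exact hxy ((H i).add_mem h.1 h.2)
    _ ≤ #{i ∈ S | x ∉ H i} + #{i ∈ S | y ∉ H i} := by
        rw [filter_or]
        exact card_union_le _ _

variable {S}

lemma exists_card_le_two_mul_card_filter_notMem [Finite G] (hH : ∀ i ∈ S, H i ≠ ⊤) :
    ∃ g, #S ≤ 2 * #{i ∈ S | g ∉ H i} := by
  have := Fintype.ofFinite G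
  have hsum : ∑ _g : G, #S ≤ ∑ g, 2 * #{i ∈ S | g ∉ H i} :=
    calc ∑ _g : G, #S = ∑ _i ∈ S, Fintype.card G := by simp [mul_comm]
      _ ≤ ∑ i ∈ S, 2 * #{g | g ∉ H i} :=
        sum_le_sum fun i hi ↦ card_le_two_mul_card_notMem (hH i hi)
      _ = ∑ g, 2 * #{i ∈ S | g ∉ H i} := by
        rw [← mul_sum, ← mul_sum]
        exact congrArg _ (sum_card_bipartiteAbove_eq_sum_card_bipartiteBelow _).symm
  obtain ⟨g, -, hg⟩ := exists_le_of_sum_le univ_nonempty hsum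
  exact ⟨g, hg⟩

theorem card_le_two_mul_card_quarter_le_card_filter_notMem [Fintype G]
    (hH : ∀ i ∈ S, H i ≠ ⊤) :
    Fintype.card G ≤ 2 * #{g | #S ≤ 4 * #{i ∈ S | g ∉ H i}} := by
  obtain ⟨g₀, hg₀⟩ := exists_card_le_two_mul_card_filter_notMem hH
  refine card_le_two_mul_card_le_of_subadditive (c := fun g ↦ 4 * #{i ∈ S | g ∉ H i})
    (fun x y ↦ ?_) (g₀ := g₀) (by omega)
  have := card_filter_add_notMem_le S (H := H) x y
  omega

end AddGroup

section InnerProduct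

variable {k : ℕ}

/-- The subgroup of vectors orthogonal to `s` over GF(2). The vectors with `⟨R, s⟩ = 1` are those
outside it, so elevating `S` means avoiding many of the subgroups `orthogonalTo s`, `s ∈ S`. -/
def orthogonalTo (s : Fin k → ZMod 2) : AddSubgroup (Fin k → ZMod 2) :=
  (AddMonoidHom.mk' (ip · s) fun R R' ↦ add_dotProduct R R' s).ker

lemma mem_orthogonalTo {R s : Fin k → ZMod 2} : R ∈ orthogonalTo s ↔ ip R s = 0 := Iff.rfl

lemma notMem_orthogonalTo {R s : Fin k → ZMod 2} : R ∉ orthogonalTo s ↔ ip R s = 1 := by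
  have ne_zero_iff : ∀ x : ZMod 2, x ≠ 0 ↔ x = 1 := by decide
  rw [mem_orthogonalTo]
  exact ne_zero_iff _

lemma orthogonalTo_ne_top {s : Fin k → ZMod 2} (hs : s ≠ 0) : orthogonalTo s ≠ ⊤ := by
  rw [Ne, AddSubgroup.eq_top_iff']
  exact fun h ↦ hs (dotProduct_eq_zero s fun R ↦ (dotProduct_comm s R).trans (h R))

open scoped Classical in
theorem stmt1_general {S : Finset (Fin k → ZMod 2)} (hS0 : ∀ s ∈ S, s ≠ 0) {ε : ℝ}
    (hε : ε ≤ 1 / 4) : 2 ^ k ≤ 2 * #{R : Fin k → ZMod 2 | elevates ε R S} :=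
  calc 2 ^ k = Fintype.card (Fin k → ZMod 2) := by simp [ZMod.card]
    _ ≤ 2 * #{R | #S ≤ 4 * #{s ∈ S | R ∉ orthogonalTo s}} :=
      card_le_two_mul_card_quarter_le_card_filter_notMem fun s hs ↦
        orthogonalTo_ne_top (hS0 s hs)
    _ ≤ 2 * #{R | elevates ε R S} := by
      gcongr with R
      intro hR
      simp only [notMem_orthogonalTo] at hR
      have hR' : (#S : ℝ) ≤ 4 * #{s ∈ S | ip R s = 1} := mod_cast hR
      calc ε * #S ≤ 1 / 4 * #S := by gcongr
        _ ≤ #{s ∈ S | ip R s = 1} := by linarith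

end InnerProduct

open scoped Classical in
theorem stmt1 (k : ℕ) (hk : 1 ≤ k)
    (S : Finset (Fin k → ZMod 2)) (hS : S.Nonempty) (hS0 : ∀ s ∈ S, s ≠ 0) :
    2 ^ (k - 1) ≤
      (Finset.univ.filter fun R : Fin k → ZMod 2 =>
        elevates (1 / 8) R S).card := by
  have h := stmt1_general hS0 (ε := 1 / 8) (by norm_num)
  rwa [← mul_pow_sub_one (Nat.one_le_iff_ne_zero.mp hk), Nat.mul_le_mul_left_iff two_pos] at h
end

section
/- Let k ≥ 1 and n ≥ 1 be integers, let W_1, …, W_n ⊆ (ZMod 2)^k be sets of nonzero vectors each of which is either empty or of size at least 2n², and let S ⊆ (ZMod 2)^k be a nonempty set of nonzero vectors. Then there exists a vector R ∈ (ZMod 2)^k that simultaneously (1/(2√n))-splits every nonempty set W_i (1 ≤ i ≤ n) and (1/8)-elevates S. -/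
/-!
Choose `R` uniformly. The signs `(-1) ^ ⟨R, s⟩` of distinct vectors `s` are orthogonal, so their sum
over `S` has second moment `|S|`. Chebyshev's inequality, which is strict here, then shows that a
nonempty `W i` fails to split with probability less than `n / |W i| ≤ 1 / (2 * n)`; altogether the
failures to split have probability less than `1 / 2`. It remains to see that `S` fails to be
elevated with probability at most `1 / 2`. If `|S| ≤ 8`, a single `s ∈ S` with `⟨R, s⟩ = 1` elevates
`S`, and a fixed nonzero `s` has `⟨R, s⟩ = 1` with probability exactly `1 / 2`. If `|S| > 8`,
Chebyshev's inequality applies again, since `R` elevates `S` by `1 / 8` whenever it `3 / 8`-splits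
`S`.
-/

open Finset

section Bias

variable {k : ℕ}

/-- The character `R ↦ (-1) ^ ⟨R, s⟩` of `(ZMod 2)^k`, real-valued so that the counts in `splits`
and `elevates` become sums of characters. -/
noncomputable def ipChar (s : Fin k → ZMod 2) : AddChar (Fin k → ZMod 2) ℝ :=
  (AddChar.zmodChar 2 neg_one_sq).compAddMonoidHom
    (AddMonoidHom.mk' (fun R => ip R s) fun R Q => add_dotProduct R Q s)

lemma ipChar_apply (R s : Fin k → ZMod 2) : ipChar s R = if ip R s = 1 then -1 else 1 := by
  have sign_eq : ∀ a : ZMod 2, (-1 : ℝ) ^ a.val = if a = 1 then -1 else 1 := by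
    intro a
    obtain rfl | rfl : a = 0 ∨ a = 1 := by decide +revert
    · simp
    · simp [ZMod.val_one]
  exact sign_eq (ip R s)

lemma ipChar_add (s t : Fin k → ZMod 2) : ipChar (s + t) = ipChar s * ipChar t := by
  ext R
  have ip_add : ip R (s + t) = ip R s + ip R t := dotProduct_add R s t
  exact (congrArg (AddChar.zmodChar 2 neg_one_sq) ip_add).trans (AddChar.map_add_eq_mul _ _ _)

lemma ipChar_eq_zero_iff {s : Fin k → ZMod 2} : ipChar s = 0 ↔ s = 0 := by
  have apply_eq_one_iff (R : Fin k → ZMod 2) : ipChar s R = 1 ↔ ip s R = 0 := by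
    have ne_one_iff : ∀ a : ZMod 2, a ≠ 1 ↔ a = 0 := by decide
    have ip_comm : ip R s = ip s R := dotProduct_comm R s
    rw [ipChar_apply, ip_comm, ← ne_one_iff]
    split_ifs with h <;> norm_num [h]
  rw [AddChar.eq_zero_iff]
  simp only [apply_eq_one_iff]
  exact dotProduct_eq_zero_iff

lemma sum_ipChar_mul_ipChar (s t : Fin k → ZMod 2) :
    ∑ R, ipChar s R * ipChar t R = if s = t then (2 : ℝ) ^ k else 0 := by
  have add_eq_zero : s + t = 0 ↔ s = t := by rw [← ZModModule.sub_eq_add, sub_eq_zero]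
  simp only [← AddChar.mul_apply, ← ipChar_add, AddChar.sum_eq_ite, ipChar_eq_zero_iff,
    add_eq_zero, Fintype.card_fun, ZMod.card, Fintype.card_fin, Nat.cast_pow, Nat.cast_ofNat]

lemma two_mul_card_ip_ne_one {s : Fin k → ZMod 2} (hs : s ≠ 0) :
    2 * #{R | ip R s ≠ 1} = 2 ^ k := by
  have balanced : (#{R | ip R s ≠ 1} : ℝ) = #{R | ip R s = 1} := by
    have sum_eq_zero : ∑ R, ipChar s R = 0 :=
      AddChar.sum_eq_zero_iff_ne_zero.mpr (ipChar_eq_zero_iff.not.mpr hs)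
    simp only [ipChar_apply, sum_ite, sum_const, nsmul_eq_mul] at sum_eq_zero
    linarith
  have total : #{R | ip R s = 1} + #{R | ip R s ≠ 1} = 2 ^ k := by
    simpa using card_filter_add_card_filter_not (s := univ) fun R => ip R s = 1
  have : #{R | ip R s ≠ 1} = #{R | ip R s = 1} := mod_cast balanced
  lia

/-- The bias `∑ s ∈ S, (-1) ^ ⟨R, s⟩` of `⟨R, ·⟩` on `S`: the number of zeros minus the number of
ones. It is not normalised by `|S|`, so that its second moment over `R` is `|S|`. -/
noncomputable def bias (R : Fin k → ZMod 2) (S : Finset (Fin k → ZMod 2)) : ℝ :=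
  ∑ s ∈ S, ipChar s R

lemma bias_eq_card_sub (R : Fin k → ZMod 2) (S : Finset (Fin k → ZMod 2)) :
    bias R S = #S - 2 * #{s ∈ S | ip R s = 1} := by
  have sign_eq (s : Fin k → ZMod 2) : ipChar s R = 1 - 2 * if ip R s = 1 then 1 else 0 := by
    rw [ipChar_apply]
    split_ifs <;> norm_num
  simp only [bias, sign_eq, sum_sub_distrib, ← mul_sum, sum_boole, sum_const, nsmul_one]

lemma splits_iff_abs_bias_le {ε : ℝ} {R : Fin k → ZMod 2} {S : Finset (Fin k → ZMod 2)} :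
    splits ε R S ↔ |bias R S| ≤ 2 * ε * #S := by
  rw [splits, abs_le, bias_eq_card_sub]
  constructor <;> rintro ⟨_, _⟩ <;> constructor <;> linarith

lemma sum_bias_sq (S : Finset (Fin k → ZMod 2)) : ∑ R, bias R S ^ 2 = 2 ^ k * #S := by
  calc ∑ R, bias R S ^ 2 = ∑ R, ∑ s ∈ S, ∑ t ∈ S, ipChar s R * ipChar t R := by
        simp only [bias, sq, sum_mul_sum]
    _ = ∑ s ∈ S, ∑ t ∈ S, ∑ R, ipChar s R * ipChar t R := by
        rw [sum_comm]
        exact sum_congr rfl fun _ _ => sum_comm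
    _ = ∑ s ∈ S, 2 ^ k := by
        refine sum_congr rfl fun s hs => ?_
        simp only [sum_ipChar_mul_ipChar, sum_ite_eq, hs, if_true]
    _ = 2 ^ k * #S := by rw [sum_const, nsmul_eq_mul, mul_comm]

end Bias

section Failures

variable {k : ℕ} {ε : ℝ} {S : Finset (Fin k → ZMod 2)}

open scoped Classical in
lemma mul_card_not_splits_lt (hε : 0 ≤ ε) (hS : S.Nonempty) :
    4 * ε ^ 2 * #S * #{R | ¬splits ε R S} < (2 : ℝ) ^ k := by
  have card_S_pos : (0 : ℝ) < #S := mod_cast hS.card_pos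
  rcases eq_empty_or_nonempty ({R | ¬splits ε R S} : Finset _) with no_failure | failure
  · rw [no_failure, card_empty, Nat.cast_zero, mul_zero]
    positivity
  refine lt_of_mul_lt_mul_right ?_ card_S_pos.le
  calc 4 * ε ^ 2 * #S * #{R | ¬splits ε R S} * #S
      = ∑ R with ¬splits ε R S, (2 * ε * #S) ^ 2 := by rw [sum_const, nsmul_eq_mul]; ring
    _ < ∑ R with ¬splits ε R S, bias R S ^ 2 := by
        refine sum_lt_sum_of_nonempty failure fun R hR => ?_
        rw [mem_filter_univ, splits_iff_abs_bias_le, not_le] at hR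
        exact sq_lt_sq.mpr (by rwa [abs_of_nonneg (by positivity)])
    _ ≤ ∑ R, bias R S ^ 2 :=
        sum_le_univ_sum_of_nonneg fun R => sq_nonneg _
    _ = 2 ^ k * #S := sum_bias_sq S

lemma elevates_of_splits {R : Fin k → ZMod 2} (h : splits (1 / 2 - ε) R S) : elevates ε R S := by
  simpa only [elevates, sub_sub_cancel] using h.1

lemma elevates_of_mem {R s : Fin k → ZMod 2} (hε : ε * #S ≤ 1) (hs : s ∈ S) (hRs : ip R s = 1) :
    elevates ε R S := by
  have one_le_card : 1 ≤ #{s ∈ S | ip R s = 1} := card_pos.mpr ⟨s, mem_filter.mpr ⟨hs, hRs⟩⟩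
  exact hε.trans (mod_cast one_le_card)

open scoped Classical in
/-- Together the two bounds on `ε` say that `ε ≤ (3 - √5) / 4 ≈ 0.19`. -/
lemma two_mul_card_not_elevates_le (hε : ε ≤ 1 / 2) (hε_sq : 2 * ε ≤ (1 - 2 * ε) ^ 2)
    (hS : ∃ s ∈ S, s ≠ 0) : (2 * #{R | ¬elevates ε R S} : ℝ) ≤ 2 ^ k := by
  obtain ⟨s, hs, hs0⟩ := hS
  rcases le_or_gt (ε * #S) 1 with small | large
  · have failures_subset :
        univ.filter (fun R => ¬elevates ε R S) ⊆ univ.filter (fun R => ip R s ≠ 1) :=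
      monotone_filter_right _ fun R _ hR hRs => hR (elevates_of_mem small hs hRs)
    exact_mod_cast (Nat.mul_le_mul_left 2 (card_le_card failures_subset)).trans_eq
      (two_mul_card_ip_ne_one hs0)
  · have failures_subset :
        univ.filter (fun R => ¬elevates ε R S) ⊆
          univ.filter (fun R => ¬splits (1 / 2 - ε) R S) :=
      monotone_filter_right _ fun R _ hR hsplit => hR (elevates_of_splits hsplit)
    have two_le : 2 ≤ 4 * (1 / 2 - ε) ^ 2 * #S := by
      calc 2 ≤ 2 * ε * #S := by linarith
        _ ≤ (1 - 2 * ε) ^ 2 * #S := by gcongr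
        _ = 4 * (1 / 2 - ε) ^ 2 * #S := by ring
    calc (2 * #{R | ¬elevates ε R S} : ℝ)
        ≤ 4 * (1 / 2 - ε) ^ 2 * #S * #{R | ¬splits (1 / 2 - ε) R S} := by gcongr
      _ ≤ 2 ^ k := (mul_card_not_splits_lt (sub_nonneg.mpr hε) ⟨s, hs⟩).le

open scoped Classical in
lemma card_not_splits_inv_sqrt_lt {n : ℕ} (hn : 0 < n) (hS : S = ∅ ∨ 2 * n ^ 2 ≤ #S) :
    (#{R | ¬splits (1 / (2 * √n)) R S} : ℝ) < 2 ^ k / (2 * n) := by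
  rcases hS with rfl | hS
  · have no_failure : ∀ R : Fin k → ZMod 2, splits (1 / (2 * √n)) R ∅ := by simp [splits]
    simp only [no_failure, not_true_eq_false, filter_false, card_empty, Nat.cast_zero]
    positivity
  have four_mul_sq : 4 * (1 / (2 * √n)) ^ 2 = 1 / (n : ℝ) := by
    rw [div_pow, mul_pow, Real.sq_sqrt n.cast_nonneg]
    field_simp
    norm_num
  have card_le : (2 : ℝ) * n ≤ 4 * (1 / (2 * √n)) ^ 2 * #S := by
    have : 2 * (n : ℝ) ^ 2 ≤ #S := mod_cast hS
    rw [four_mul_sq, one_div_mul_eq_div, le_div_iff₀ (by positivity)]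
    linarith
  have S_nonempty : S.Nonempty := card_pos.mp (hS.trans_lt' (by positivity))
  rw [lt_div_iff₀' (by positivity)]
  calc (2 * n * #{R | ¬splits (1 / (2 * √n)) R S} : ℝ)
      ≤ 4 * (1 / (2 * √n)) ^ 2 * #S * #{R | ¬splits (1 / (2 * √n)) R S} := by gcongr
    _ < 2 ^ k := mul_card_not_splits_lt (by positivity) S_nonempty

open scoped Classical in
lemma sum_card_not_splits_lt {ι : Type*} [Fintype ι] {n : ℕ} (hn : Fintype.card ι ≤ n)
    {W : ι → Finset (Fin k → ZMod 2)} (hW : ∀ i, W i = ∅ ∨ 2 * n ^ 2 ≤ #(W i)) :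
    ∑ i, (#{R | ¬splits (1 / (2 * √n)) R (W i)} : ℝ) < 2 ^ k / 2 := by
  rcases isEmpty_or_nonempty ι with _ | _
  · rw [Fintype.sum_empty]
    positivity
  have n_pos : 0 < n := Fintype.card_pos.trans_le hn
  calc ∑ i, (#{R | ¬splits (1 / (2 * √n)) R (W i)} : ℝ)
      < ∑ _i : ι, (2 : ℝ) ^ k / (2 * n) :=
        sum_lt_sum_of_nonempty univ_nonempty fun i _ => card_not_splits_inv_sqrt_lt n_pos (hW i)
    _ = Fintype.card ι * (2 ^ k / (2 * n)) := by rw [sum_const, card_univ, nsmul_eq_mul]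
    _ ≤ n * (2 ^ k / (2 * n)) := by gcongr
    _ = 2 ^ k / 2 := by field_simp

end Failures

theorem stmt2_general {ι : Type*} [Fintype ι] {k n : ℕ} (hn : Fintype.card ι ≤ n)
    (W : ι → Finset (Fin k → ZMod 2)) (hW : ∀ i, W i = ∅ ∨ 2 * n ^ 2 ≤ #(W i))
    {ε : ℝ} (hε : ε ≤ 1 / 2) (hε_sq : 2 * ε ≤ (1 - 2 * ε) ^ 2)
    (S : Finset (Fin k → ZMod 2)) (hS : ∃ s ∈ S, s ≠ 0) :
    ∃ R : Fin k → ZMod 2, (∀ i, splits (1 / (2 * √n)) R (W i)) ∧ elevates ε R S := by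
  classical
  by_contra! not_elevates
  set splitFailures : ι → Finset (Fin k → ZMod 2) :=
    fun i => {R | ¬splits (1 / (2 * √n)) R (W i)}
  have failures_cover :
      univ ⊆ univ.biUnion splitFailures ∪ univ.filter (fun R => ¬elevates ε R S) := by
    intro R _
    simp only [splitFailures, mem_union, mem_biUnion, mem_filter_univ, mem_univ, true_and]
    by_contra! h
    exact not_elevates R h.1 h.2
  have union_bound : 2 ^ k ≤ ∑ i, #(splitFailures i) + #{R | ¬elevates ε R S} := by
    calc 2 ^ k = #(univ : Finset (Fin k → ZMod 2)) := by simp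
      _ ≤ #(univ.biUnion splitFailures) + #{R | ¬elevates ε R S} :=
          (card_le_card failures_cover).trans (card_union_le _ _)
      _ ≤ ∑ i, #(splitFailures i) + #{R | ¬elevates ε R S} := by
          gcongr
          exact card_biUnion_le
  have union_bound_real :
      (2 : ℝ) ^ k ≤ ∑ i, (#(splitFailures i) : ℝ) + #{R | ¬elevates ε R S} := mod_cast union_bound
  linarith [sum_card_not_splits_lt hn hW, two_mul_card_not_elevates_le hε hε_sq hS]

theorem stmt2 (k n : ℕ) (hk : 1 ≤ k) (hn : 1 ≤ n)
    (W : Fin n → Finset (Fin k → ZMod 2))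
    (hW0 : ∀ i, ∀ s ∈ W i, s ≠ 0)
    (hWcard : ∀ i, W i = ∅ ∨ 2 * n ^ 2 ≤ (W i).card)
    (S : Finset (Fin k → ZMod 2)) (hS : S.Nonempty) (hS0 : ∀ s ∈ S, s ≠ 0) :
    ∃ R : Fin k → ZMod 2,
      (∀ i, (W i).Nonempty → splits (1 / (2 * Real.sqrt n)) R (W i)) ∧
      elevates (1 / 8) R S := by
  obtain ⟨R, hR, hRS⟩ := stmt2_general (Fintype.card_fin n).le W hWcard (ε := 1 / 8)
    (by norm_num) (by norm_num) S (hS.imp fun s hs => ⟨hs, hS0 s hs⟩)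
  exact ⟨R, fun i _ => hR i, hRS⟩
end

section
/- Let k ∈ ℕ and let a : ℕ × ℕ → ℝ be a nonnegative function such that a(i, 0) ≤ C(k, i) for every i, a(0, t) = 0 for every t, and a(i, t+1) ≤ (2/3)·(a(i−1, t) + a(i, t)) for all i ≥ 1 and all t. Then a(i, t) ≤ (2/3)^t · C(k+t, i) for all i and t, where C(·,·) denotes the binomial coefficient. -/
/-!
By Pascal's rule `(i, t) ↦ c ^ t * (k + t).choose i` solves the recurrence with equality, for
every factor `c`. The right-hand side of the recurrence is monotone in the earlier values, so a
subsolution that starts below this solution, both at `t = 0` and along `i = 0`, stays below it.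
-/

theorem le_of_monotone_recurrence {α : Type*} [Preorder α] {F : α × α → α} (hF : Monotone F)
    {a b : ℕ → ℕ → α} (hinit : ∀ i, a i 0 ≤ b i 0) (hbdry : ∀ t, a 0 t ≤ b 0 t)
    (ha : ∀ i t, a (i + 1) (t + 1) ≤ F (a i t, a (i + 1) t))
    (hb : ∀ i t, F (b i t, b (i + 1) t) ≤ b (i + 1) (t + 1)) (i t : ℕ) :
    a i t ≤ b i t := by
  induction t generalizing i with
  | zero => exact hinit i
  | succ t ih =>
    cases i with
    | zero => exact hbdry (t + 1)
    | succ i =>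
      calc a (i + 1) (t + 1) ≤ F (a i t, a (i + 1) t) := ha i t
        _ ≤ F (b i t, b (i + 1) t) := hF ⟨ih i, ih (i + 1)⟩
        _ ≤ b (i + 1) (t + 1) := hb i t

theorem pow_succ_mul_choose_succ_succ {R : Type*} [CommSemiring R] (c : R) (n i t : ℕ) :
    c ^ (t + 1) * ((n + 1).choose (i + 1) : R) =
      c * (c ^ t * (n.choose i : R) + c ^ t * (n.choose (i + 1) : R)) := by
  rw [Nat.choose_succ_succ', Nat.cast_add]
  ring

theorem stmt3_general {R : Type*} [CommSemiring R] [PartialOrder R] [IsOrderedRing R] {c : R}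
    (hc : 0 ≤ c) (k : ℕ) (a : ℕ → ℕ → R)
    (hinit : ∀ i, a i 0 ≤ (k.choose i : R))
    (hbdry : ∀ t, a 0 t ≤ c ^ t)
    (hrec : ∀ i t, a (i + 1) (t + 1) ≤ c * (a i t + a (i + 1) t)) (i t : ℕ) :
    a i t ≤ c ^ t * ((k + t).choose i : R) := by
  have hmono : Monotone fun p : R × R ↦ c * (p.1 + p.2) :=
    (monotone_fst.add monotone_snd).const_mul hc
  refine le_of_monotone_recurrence (b := fun i t ↦ c ^ t * ((k + t).choose i : R)) hmono
    (fun i ↦ ?_) (fun t ↦ ?_) hrec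
    (fun i t ↦ (pow_succ_mul_choose_succ_succ c (k + t) i t).ge) i t
  · simpa using hinit i
  · simpa using hbdry t

theorem stmt3 (k : ℕ) (a : ℕ → ℕ → ℝ)
    (hnonneg : ∀ i t, 0 ≤ a i t)
    (hinit : ∀ i, a i 0 ≤ (k.choose i : ℝ))
    (hzero : ∀ t, a 0 t = 0)
    (hrec : ∀ i t, 1 ≤ i → a i (t + 1) ≤ (2 / 3) * (a (i - 1) t + a i t)) :
    ∀ i t, a i t ≤ (2 / 3 : ℝ) ^ t * ((k + t).choose i : ℝ) :=
  stmt3_general (by norm_num) k a hinit (fun t ↦ (hzero t).trans_le (by positivity))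
    fun i t ↦ hrec (i + 1) t i.succ_pos
end

section
/- Let k ≥ 1 be an integer and let b : ℕ × ℕ → ℝ be a nonnegative function (b(i,n) defined for n ≥ k) such that b(i, k) ≤ C(k, i) for every i, b(0, n) = 0 for every n ≥ k, and for every n ≥ k and every i ≥ 1, b(i, n+1) ≤ (1 + 1/√n)·(1/2)·(b(i−1, n) + b(i, n)). Then for every n ≥ k and every i, b(i, n) ≤ C(n, i)·2^(k−n)·∏_{j=k}^{n−1} (1 + 1/√j), where C(·,·) denotes the binomial coefficient. -/
/-! By Pascal's rule, the weights of a random code multiplied by the product of the growth factors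
satisfy with equality the recurrence that `b` satisfies as an inequality. That recurrence has
nonnegative coefficients, so its inequality version propagates `b ≤ w` from the initial column
`n = k` and the boundary row `i = 0`. -/

theorem le_of_pascal_recurrence {R : Type*} [Semiring R] [PartialOrder R] [IsOrderedRing R]
    {k : ℕ} {a : ℕ → R} {b w : ℕ → ℕ → R} (ha : ∀ n, k ≤ n → 0 ≤ a n)
    (hinit : ∀ i, b i k ≤ w i k) (hzero : ∀ n, k < n → b 0 n ≤ w 0 n)
    (hb : ∀ i n, k ≤ n → b (i + 1) (n + 1) ≤ a n * (b i n + b (i + 1) n))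
    (hw : ∀ i n, k ≤ n → a n * (w i n + w (i + 1) n) ≤ w (i + 1) (n + 1))
    {n : ℕ} (hn : k ≤ n) (i : ℕ) : b i n ≤ w i n := by
  induction n, hn using Nat.le_induction generalizing i with
  | base => exact hinit i
  | succ n hn ih =>
    cases i with
    | zero => exact hzero (n + 1) (Nat.lt_succ_of_le hn)
    | succ i =>
      calc b (i + 1) (n + 1) ≤ a n * (b i n + b (i + 1) n) := hb i n hn
        _ ≤ a n * (w i n + w (i + 1) n) :=
          mul_le_mul_of_nonneg_left (add_le_add (ih i) (ih (i + 1))) (ha n hn)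
        _ ≤ w (i + 1) (n + 1) := hw i n hn

/-- The expected number `w*_i(n, k)` of codewords of weight `i` in a random binary linear code of
length `n` and dimension `k`. The exponent `k - n` is taken in `ℤ`, since it is negative for
`k < n`. -/
def expectedWeight (𝕜 : Type*) [DivisionRing 𝕜] (i n k : ℕ) : 𝕜 :=
  n.choose i * 2 ^ ((k : ℤ) - n)

section ExpectedWeight

variable {𝕜 : Type*} [Field 𝕜]

theorem expectedWeight_self (i k : ℕ) : expectedWeight 𝕜 i k k = k.choose i := by
  simp [expectedWeight]

theorem expectedWeight_succ_succ [NeZero (2 : 𝕜)] (i n k : ℕ) :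
    expectedWeight 𝕜 (i + 1) (n + 1) k =
      1 / 2 * (expectedWeight 𝕜 i n k + expectedWeight 𝕜 (i + 1) n k) := by
  have hpow : (2 : 𝕜) ^ ((k : ℤ) - (n + 1 : ℕ)) = 2 ^ ((k : ℤ) - n) * 2⁻¹ := by
    rw [Nat.cast_succ, ← sub_sub, zpow_sub_one₀ two_ne_zero]
  unfold expectedWeight
  rw [hpow, Nat.choose_succ_succ', Nat.cast_add]
  ring

variable [LinearOrder 𝕜] [IsStrictOrderedRing 𝕜]

theorem expectedWeight_nonneg (i n k : ℕ) : 0 ≤ expectedWeight 𝕜 i n k := by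
  unfold expectedWeight
  positivity

theorem stmt4_general {k : ℕ} {c : ℕ → 𝕜} {b : ℕ → ℕ → 𝕜} (hc : ∀ n, k ≤ n → 0 ≤ c n)
    (hinit : ∀ i, b i k ≤ k.choose i) (hzero : ∀ n, k < n → b 0 n ≤ 0)
    (hrec : ∀ i n, k ≤ n → b (i + 1) (n + 1) ≤ c n * (1 / 2) * (b i n + b (i + 1) n))
    {n : ℕ} (hn : k ≤ n) (i : ℕ) :
    b i n ≤ expectedWeight 𝕜 i n k * ∏ j ∈ Finset.Ico k n, c j := by
  have hprod (n : ℕ) : 0 ≤ ∏ j ∈ Finset.Ico k n, c j :=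
    Finset.prod_nonneg fun j hj => hc j (Finset.mem_Ico.mp hj).1
  refine le_of_pascal_recurrence
    (w := fun i n => expectedWeight 𝕜 i n k * ∏ j ∈ Finset.Ico k n, c j)
    (fun n hn => mul_nonneg (hc n hn) one_half_pos.le) (fun i => ?initial)
    (fun n hn => (hzero n hn).trans (mul_nonneg (expectedWeight_nonneg 0 n k) (hprod n)))
    hrec (fun i n hn => Eq.le ?recurrence) hn i
  case initial => simpa [expectedWeight_self] using hinit i
  case recurrence =>
    rw [expectedWeight_succ_succ, Finset.prod_Ico_succ_top hn]
    ring

end ExpectedWeight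

theorem stmt4 (k : ℕ) (hk : 1 ≤ k) (b : ℕ → ℕ → ℝ)
    (hnonneg : ∀ i n, 0 ≤ b i n)
    (hinit : ∀ i, b i k ≤ (k.choose i : ℝ))
    (hzero : ∀ n, k ≤ n → b 0 n = 0)
    (hrec : ∀ i n, k ≤ n → 1 ≤ i →
      b i (n + 1) ≤ (1 + 1 / Real.sqrt n) * (1 / 2) * (b (i - 1) n + b i n)) :
    ∀ n, k ≤ n → ∀ i,
      b i n ≤ (n.choose i : ℝ) * (2 : ℝ) ^ ((k : ℤ) - (n : ℤ)) *
        ∏ j ∈ Finset.Ico k n, (1 + 1 / Real.sqrt j) :=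
  fun _ hn i => stmt4_general (fun n _ => by positivity) hinit (fun n hn => (hzero n hn.le).le)
    (fun i n hn => hrec (i + 1) n hn i.succ_pos) hn i
end

section
/- Let p be a real number with 0 < p < 1/2 and let i ≥ 1 be an integer. Then Σ_{j=⌈i/2⌉}^{i} C(i, j)·p^j·(1−p)^{i−j} ≤ (4p(1−p))^{i/2}; equivalently, this sum is at most 2^{−β·i} where β = −(1/2)·log₂(4p(1−p)) > 0. -/
/-!
Among the terms with `j ≥ n / 2`, the exponent of the smaller weight `p` is at least that of `q`, so
trading each surplus factor `p` for the geometric mean `√(p * q) ≥ p` bounds `p ^ j * q ^ (n - j)`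
by `√(p * q) ^ n`. The binomial coefficients add up to at most `2 ^ n`, which turns this uniform
bound into `(2 * √(p * q)) ^ n = (4 * p * q) ^ (n / 2)`.
-/

lemma sum_choose_le_two_pow (n : ℕ) (s : Finset ℕ) : ∑ j ∈ s, n.choose j ≤ 2 ^ n := by
  rw [← Nat.sum_range_choose]
  refine Finset.sum_le_sum_of_ne_zero fun j _ hj => ?_
  rwa [Finset.mem_range_succ_iff, ← Nat.choose_ne_zero_iff]

lemma four_mul_rpow_div_two {x : ℝ} (hx : 0 ≤ x) (n : ℕ) :
    (4 * x) ^ ((n : ℝ) / 2) = 2 ^ n * √x ^ n := by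
  have hsqrt : √(4 * x) = 2 * √x := by
    rw [show 4 * x = 2 ^ 2 * x by ring, Real.sqrt_mul (by positivity), Real.sqrt_sq zero_le_two]
  rw [Real.rpow_div_two_eq_sqrt _ (by positivity), Real.rpow_natCast, hsqrt, mul_pow]

section Weights

variable {p q : ℝ}

lemma le_sqrt_mul_of_le (hp : 0 ≤ p) (hpq : p ≤ q) : p ≤ √(p * q) :=
  Real.le_sqrt_of_sq_le <| by
    rw [sq]
    gcongr

lemma pow_mul_pow_le_sqrt_mul_pow (hp : 0 ≤ p) (hpq : p ≤ q) {j k : ℕ} (hkj : k ≤ j) :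
    p ^ j * q ^ k ≤ √(p * q) ^ (j + k) := by
  have hq : 0 ≤ q := hp.trans hpq
  obtain ⟨d, rfl⟩ := Nat.exists_eq_add_of_le hkj
  calc p ^ (k + d) * q ^ k = (p * q) ^ k * p ^ d := by ring
    _ ≤ (p * q) ^ k * √(p * q) ^ d := by
      gcongr
      exact le_sqrt_mul_of_le hp hpq
    _ = (√(p * q) ^ 2) ^ k * √(p * q) ^ d := by rw [Real.sq_sqrt (mul_nonneg hp hq)]
    _ = √(p * q) ^ (k + d + k) := by ring

theorem stmt6_general (hp : 0 ≤ p) (hpq : p ≤ q) (n : ℕ) :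
    ∑ j ∈ Finset.Icc ((n + 1) / 2) n, (n.choose j : ℝ) * p ^ j * q ^ (n - j) ≤
      (4 * p * q) ^ ((n : ℝ) / 2) := by
  have hterm : ∀ j ∈ Finset.Icc ((n + 1) / 2) n, p ^ j * q ^ (n - j) ≤ √(p * q) ^ n := by
    intro j hj
    obtain ⟨hnj, hjn⟩ := Finset.mem_Icc.mp hj
    simpa only [Nat.add_sub_cancel' hjn] using
      pow_mul_pow_le_sqrt_mul_pow hp hpq (show n - j ≤ j by omega)
  calc ∑ j ∈ Finset.Icc ((n + 1) / 2) n, (n.choose j : ℝ) * p ^ j * q ^ (n - j)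
      ≤ ∑ j ∈ Finset.Icc ((n + 1) / 2) n, (n.choose j : ℝ) * √(p * q) ^ n := by
        simp only [mul_assoc]
        gcongr with j hj
        exact hterm j hj
    _ = (∑ j ∈ Finset.Icc ((n + 1) / 2) n, (n.choose j : ℝ)) * √(p * q) ^ n :=
        (Finset.sum_mul ..).symm
    _ ≤ 2 ^ n * √(p * q) ^ n := by
        gcongr
        exact_mod_cast sum_choose_le_two_pow n _
    _ = (4 * p * q) ^ ((n : ℝ) / 2) := by
        rw [mul_assoc 4, four_mul_rpow_div_two (mul_nonneg hp (hp.trans hpq))]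

end Weights

theorem stmt6 (p : ℝ) (hp0 : 0 < p) (hp1 : p < 1 / 2) (i : ℕ) (hi : 1 ≤ i) :
    ∑ j ∈ Finset.Icc ((i + 1) / 2) i, (i.choose j : ℝ) * p ^ j * (1 - p) ^ (i - j) ≤
      (4 * p * (1 - p)) ^ ((i : ℝ) / 2) :=
  stmt6_general hp0.le (by linarith) i
end

section
/- Let c ∈ (ZMod 2)^n have Hamming weight wt(c) = i, and let r ≤ n be a natural number. Then |{y ∈ (ZMod 2)^n : wt(y) = r and dist(y, c) ≤ r}| = Σ_{w=⌈i/2⌉}^{r} C(i, w)·C(n−i, r−w), where C(·,·) denotes the binomial coefficient. -/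
open Finset

/-- Hamming weight of a binary vector. -/
def wt {n : ℕ} (x : Fin n → ZMod 2) : ℕ := (Finset.univ.filter fun j => x j = 1).card

/-!
Identify a binary vector with its set of ones, so that subtraction becomes symmetric difference.
If `T` has `r` elements, `w` of them in `S`, then `#(T ∆ S) = r + #S - 2 * w`, so a bound on the
distance from `T` to `S` is a lower bound on `w`. The sets `T` with a given `w` are the unions of a
`w`-subset of `S` and an `(r - w)`-subset of its complement.
-/

open scoped symmDiff

section FinsetCounting

variable {α : Type*} [DecidableEq α]

lemma card_symmDiff_add_two_mul_card_inter (T S : Finset α) :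
    #(T ∆ S) + 2 * #(T ∩ S) = #T + #S := by
  have h_symmDiff : #(T ∆ S) = #(T \ S) + #(S \ T) :=
    card_union_of_disjoint disjoint_sdiff_sdiff
  have hT := card_sdiff_add_card_inter T S
  have hS := card_sdiff_add_card_inter S T
  rw [inter_comm S T] at hS
  omega

lemma union_inter_of_subset_of_disjoint {A B S : Finset α} (hA : A ⊆ S) (hB : Disjoint B S) :
    (A ∪ B) ∩ S = A := by
  rw [union_inter_distrib_right, inter_eq_left.mpr hA, disjoint_iff_inter_eq_empty.mp hB,
    union_empty]

lemma union_sdiff_of_subset_of_disjoint {A B S : Finset α} (hA : A ⊆ S) (hB : Disjoint B S) :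
    (A ∪ B) \ S = B := by
  rw [union_sdiff_distrib, sdiff_eq_empty_iff_subset.mpr hA, sdiff_eq_self_of_disjoint hB,
    empty_union]

lemma card_filter_card_inter_powersetCard (U S : Finset α) {r w : ℕ} (hw : w ≤ r) :
    #{T ∈ powersetCard r U | #(T ∩ S) = w} =
      (#(U ∩ S)).choose w * (#(U \ S)).choose (r - w) := by
  rw [← card_powersetCard, ← card_powersetCard, ← card_product]
  refine card_nbij' (fun T => (T ∩ S, T \ S)) (fun p => p.1 ∪ p.2) ?_ ?_ ?_ ?_
  · intro T hT
    simp only [mem_coe, mem_filter, mem_powersetCard, mem_product] at hT ⊢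
    obtain ⟨⟨hTU, hTr⟩, hTw⟩ := hT
    have h_split := card_sdiff_add_card_inter T S
    exact ⟨⟨inter_subset_inter_right hTU, hTw⟩, sdiff_subset_sdiff hTU Subset.rfl, by omega⟩
  · rintro ⟨A, B⟩ hAB
    simp only [mem_coe, mem_filter, mem_powersetCard, mem_product, subset_inter_iff,
      subset_sdiff] at hAB ⊢
    obtain ⟨⟨⟨hAU, hAS⟩, hAw⟩, ⟨hBU, hBS⟩, hBw⟩ := hAB
    have h_card : #(A ∪ B) = #A + #B :=
      card_union_of_disjoint (disjoint_of_subset_left hAS hBS.symm)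
    rw [union_inter_of_subset_of_disjoint hAS hBS]
    exact ⟨⟨union_subset hAU hBU, by omega⟩, hAw⟩
  · intro T _
    exact (union_comm _ _).trans (sdiff_union_inter T S)
  · rintro ⟨A, B⟩ hAB
    simp only [mem_coe, mem_product, mem_powersetCard, subset_inter_iff, subset_sdiff] at hAB
    obtain ⟨⟨⟨-, hAS⟩, -⟩, ⟨-, hBS⟩, -⟩ := hAB
    exact Prod.ext (union_inter_of_subset_of_disjoint hAS hBS)
      (union_sdiff_of_subset_of_disjoint hAS hBS)

/- The lower summation bound is `⌈(#S + r - d) / 2⌉`; where `#S + r - d` truncates, the distance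
condition is vacuous. -/
lemma card_filter_card_symmDiff_le_powersetCard (U S : Finset α) (r d : ℕ) :
    #{T ∈ powersetCard r U | #(T ∆ S) ≤ d} =
      ∑ w ∈ Icc ((#S + r - d + 1) / 2) r,
        (#(U ∩ S)).choose w * (#(U \ S)).choose (r - w) := by
  have h_dist_iff (T : Finset α) (hT : #T = r) :
      #(T ∆ S) ≤ d ↔ (#S + r - d + 1) / 2 ≤ #(T ∩ S) := by
    have h_card := card_symmDiff_add_two_mul_card_inter T S
    omega
  have h_maps : ∀ T ∈ ({T ∈ powersetCard r U | #(T ∆ S) ≤ d} : Finset (Finset α)),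
      #(T ∩ S) ∈ Icc ((#S + r - d + 1) / 2) r := by
    intro T hT
    obtain ⟨⟨-, hTr⟩, hTd⟩ := by simpa only [mem_filter, mem_powersetCard] using hT
    exact mem_Icc.mpr ⟨(h_dist_iff T hTr).mp hTd, hTr ▸ card_le_card inter_subset_left⟩
  rw [card_eq_sum_card_fiberwise h_maps]
  refine sum_congr rfl fun w hw => ?_
  obtain ⟨hw_lower, hwr⟩ := mem_Icc.mp hw
  rw [← card_filter_card_inter_powersetCard U S hwr, filter_filter]
  refine congrArg card (filter_congr fun T hT => and_iff_right_of_imp fun hTw => ?_)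
  exact (h_dist_iff T (mem_powersetCard.mp hT).2).mpr (hTw ▸ hw_lower)

end FinsetCounting

section BinaryVectors

variable {α : Type*} [Fintype α] [DecidableEq α]

/-- The identification of binary vectors with finite sets, sending a vector to its support, the
set of positions of its ones, and a set to its indicator vector. It carries the Hamming weight to
the cardinality. -/
def supportEquiv : (α → ZMod 2) ≃ Finset α where
  toFun x := {j | x j = 1}
  invFun S j := if j ∈ S then 1 else 0
  left_inv x := by
    have h_bit : ∀ a : ZMod 2, (if a = 1 then 1 else 0) = a := by decide
    funext j
    simpa only [mem_filter_univ] using h_bit (x j)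
  right_inv S := by
    ext j
    simp

lemma mem_supportEquiv {x : α → ZMod 2} {j : α} : j ∈ supportEquiv x ↔ x j = 1 :=
  mem_filter_univ j

lemma supportEquiv_sub (x y : α → ZMod 2) :
    supportEquiv (x - y) = supportEquiv x ∆ supportEquiv y := by
  have h_bit : ∀ a b : ZMod 2, a - b = 1 ↔ a = 1 ∧ b ≠ 1 ∨ b = 1 ∧ a ≠ 1 := by decide
  ext j
  simpa only [mem_symmDiff, mem_supportEquiv, Pi.sub_apply] using h_bit (x j) (y j)

end BinaryVectors

lemma wt_eq_card_supportEquiv {n : ℕ} (x : Fin n → ZMod 2) : wt x = #(supportEquiv x) := rfl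

theorem stmt9_general {n : ℕ} (r d : ℕ) (c : Fin n → ZMod 2) :
    #{y : Fin n → ZMod 2 | wt y = r ∧ wt (y - c) ≤ d} =
      ∑ w ∈ Icc ((wt c + r - d + 1) / 2) r, (wt c).choose w * (n - wt c).choose (r - w) := by
  have h_transfer : #{y : Fin n → ZMod 2 | wt y = r ∧ wt (y - c) ≤ d} =
      #{T ∈ powersetCard r univ | #(T ∆ supportEquiv c) ≤ d} :=
    card_equiv supportEquiv fun y => by
      simp only [mem_filter, mem_univ, true_and, mem_powersetCard_univ,
        wt_eq_card_supportEquiv, supportEquiv_sub]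
  rw [h_transfer, card_filter_card_symmDiff_le_powersetCard, univ_inter, card_univ_sdiff,
    Fintype.card_fin, wt_eq_card_supportEquiv]

theorem stmt9 (n i r : ℕ) (c : Fin n → ZMod 2) (hc : wt c = i) (hr : r ≤ n) :
    (Finset.univ.filter fun y : Fin n → ZMod 2 => wt y = r ∧ wt (y - c) ≤ r).card =
      ∑ w ∈ Finset.Icc ((i + 1) / 2) r, i.choose w * (n - i).choose (r - w) := by
  rw [stmt9_general, Nat.add_sub_cancel, hc]
end

section
/- Let a, b be real numbers with 0 < a ≤ b, let f(x) = binom(a,x)·binom(b,x), and let t = (ab − 1)/(a + b + 2). Then for every real x with 0 ≤ x ≤ a − 1: if x ≤ t then f(x) ≤ f(x+1), and if x ≥ t then f(x) ≥ f(x+1). -/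
/-- Binomial coefficient extended to real arguments via the Gamma function. -/
noncomputable def rbinom (a x : ℝ) : ℝ :=
  Real.Gamma (a + 1) / (Real.Gamma (x + 1) * Real.Gamma (a - x + 1))

/-! Moving from `x` to `x + 1` multiplies `binom(a,x) * binom(b,x)`, which is positive, by
`(a - x) * (b - x) / (x + 1) ^ 2`. The quadratic terms cancel in the comparison of this ratio
with `1`: `(a - x) * (b - x) - (x + 1) ^ 2 = (a * b - 1) - (a + b + 2) * x`. -/

-- At `s = 0` this is the pole of `Γ`, where Mathlib's value `Γ 0 = 0` gives the entire
-- function `1 / Γ` its correct value `0`.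
lemma inv_Gamma_eq_mul_inv_Gamma_add_one (s : ℝ) :
    (Real.Gamma s)⁻¹ = s * (Real.Gamma (s + 1))⁻¹ := by
  rcases eq_or_ne s 0 with rfl | hs
  · simp
  · rw [Real.Gamma_add_one hs, mul_inv, mul_inv_cancel_left₀ hs]

lemma rbinom_add_one_mul_add_one (a x : ℝ) :
    rbinom a (x + 1) * (x + 1) = rbinom a x * (a - x) := by
  have hshift : a - (x + 1) + 1 = a - x := by ring
  simp only [rbinom, div_eq_mul_inv, mul_inv, hshift,
    inv_Gamma_eq_mul_inv_Gamma_add_one (x + 1), inv_Gamma_eq_mul_inv_Gamma_add_one (a - x)]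
  ring

lemma rbinom_pos {a x : ℝ} (ha : -1 < a) (hx : -1 < x) (hxa : x < a + 1) : 0 < rbinom a x :=
  div_pos (Real.Gamma_pos_of_pos (by linarith))
    (mul_pos (Real.Gamma_pos_of_pos (by linarith)) (Real.Gamma_pos_of_pos (by linarith)))

lemma cmp_add_one_sq_sub_mul_sub {a b : ℝ} (hab : 0 < a + b + 2) (x : ℝ) :
    cmp ((x + 1) ^ 2) ((a - x) * (b - x)) = cmp x ((a * b - 1) / (a + b + 2)) := by
  have hdiff : (x + 1) ^ 2 - (a - x) * (b - x) = x * (a + b + 2) - (a * b - 1) := by ring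
  calc cmp ((x + 1) ^ 2) ((a - x) * (b - x))
      = cmp (x * (a + b + 2)) (a * b - 1) := by rw [← cmp_sub_zero, hdiff, cmp_sub_zero]
    _ = cmp x ((a * b - 1) / (a + b + 2)) := by
      rw [← cmp_mul_pos_right hab x, div_mul_cancel₀ _ hab.ne']

theorem stmt11_general {a b x : ℝ} (hx : -1 < x) (hxa : x < a) (hxb : x < b) :
    cmp (rbinom a x * rbinom b x) (rbinom a (x + 1) * rbinom b (x + 1)) =
      cmp x ((a * b - 1) / (a + b + 2)) := by
  have hpos : 0 < rbinom a x * rbinom b x :=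
    mul_pos (rbinom_pos (by linarith) hx (by linarith))
      (rbinom_pos (by linarith) hx (by linarith))
  have hsq : 0 < (x + 1) ^ 2 := pow_pos (by linarith) 2
  have hstep : rbinom a (x + 1) * rbinom b (x + 1) * (x + 1) ^ 2 =
      rbinom a x * rbinom b x * ((a - x) * (b - x)) := by
    rw [sq, mul_mul_mul_comm, rbinom_add_one_mul_add_one, rbinom_add_one_mul_add_one,
      mul_mul_mul_comm]
  calc cmp (rbinom a x * rbinom b x) (rbinom a (x + 1) * rbinom b (x + 1))
      = cmp (rbinom a x * rbinom b x * (x + 1) ^ 2)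
          (rbinom a x * rbinom b x * ((a - x) * (b - x))) := by
        rw [← hstep, cmp_mul_pos_right hsq]
    _ = cmp ((x + 1) ^ 2) ((a - x) * (b - x)) := cmp_mul_pos_left hpos _ _
    _ = cmp x ((a * b - 1) / (a + b + 2)) := cmp_add_one_sq_sub_mul_sub (by linarith) x

theorem stmt11 (a b : ℝ) (ha : 0 < a) (hab : a ≤ b)
    (f : ℝ → ℝ) (hf : ∀ x, f x = rbinom a x * rbinom b x)
    (t : ℝ) (ht : t = (a * b - 1) / (a + b + 2)) :
    ∀ x : ℝ, 0 ≤ x → x ≤ a - 1 →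
      (x ≤ t → f x ≤ f (x + 1)) ∧ (t ≤ x → f (x + 1) ≤ f x) := by
  intro x hx hxa
  have hcmp : cmp (f x) (f (x + 1)) = cmp x t := by
    rw [hf, hf, ht, stmt11_general] <;> linarith
  exact ⟨(le_iff_le_of_cmp_eq_cmp hcmp).2, (le_iff_le_of_cmp_eq_cmp (cmp_eq_cmp_symm.1 hcmp)).2⟩
end

section
/- (Existence of a pseudo-random-weight infinite generating matrix.) For every integer k ≥ 1 there exists an infinite sequence of row vectors R_1, R_2, … ∈ (ZMod 2)^k with R_i equal to the i-th standard basis vector for 1 ≤ i ≤ k, such that for every n ≥ max(k, 2), the weight distribution w_{i,n} = |{m ∈ (ZMod 2)^k : wt(G_n·m) = i}| of the code generated by G_n satisfies: (a) w_{i,n} = 0 for every i with 0 < i ≤ (n − k)/(55·log₂ n), i.e., the minimum distance of the code exceeds (n − k)/(55·log₂ n); and (b) w_{i,n} ≤ 2n⁴ + C(n,i)·2^{k−n}·e^{2(√n − √k)} for every i. -/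
open Finset

/-!
Continue the identity matrix with independent uniformly random rows. A word of length `n` with
nonzero systematic part is then a codeword with probability `2^{k-n}`, and for two distinct such
words these events are never positively correlated: if the systematic parts agree, at most one of
the words is a codeword, and otherwise the systematic parts are linearly independent over `ZMod 2`,
so the events are independent. Hence for `i > 0` both the mean and the variance of `w_{i,n}` are at
most `M = C(n,i) 2^{k-n}`.

For small `i` the definition of the threshold gives `n^{55 i} ≤ 2^{n-k}`, so `M ≤ 1/(8n³)`, and by
the union bound `w_{i,n} ≠ 0` with at most this probability. Since `e^{2(√n-√k)} ≥ 1 + 1/n` for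
`n > k`, exceeding the bound in (b) means deviating from `M` by at least `2n⁴ + M/n`, which by
Chebyshev's inequality and AM-GM again has probability at most `1/(8n³)`. Summing over
`1 ≤ i ≤ n` and over `n` bounds the total failure probability by `π²/24 < 1`.
-/

open MeasureTheory ProbabilityTheory Matrix

section FiniteProbability

lemma measureReal_uniformOn_univ_fiber {G H : Type*} [AddGroup G] [Finite G] [AddGroup H]
    [Fintype H] [MeasurableSpace G] [MeasurableSingletonClass G] {f : G →+ H}
    (hf : Function.Surjective f) (y : H) :
    (uniformOn (Set.univ : Set G)).real {x | f x = y} = (Fintype.card H : ℝ)⁻¹ := by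
  classical
  have := Fintype.ofFinite G
  have hfiber : ∀ z, #{x | f x = z} = #{x | f x = y} := fun z =>
    AddMonoidHom.card_fiber_eq_of_mem_range f (hf z) (hf y)
  have hcard : Fintype.card G = Fintype.card H * #{x | f x = y} := by
    rw [← card_univ, card_eq_sum_card_fiberwise (f := f) (t := univ)
      fun _ _ => mem_coe.mpr (mem_univ _)]
    simp [hfiber]
  have hne : (#{x | f x = y} : ℝ) ≠ 0 := by
    obtain ⟨x, hx⟩ := hf y
    exact_mod_cast (card_pos.mpr ⟨x, by simpa using hx⟩).ne'
  have hset : {x | f x = y} = ((univ.filter fun x => f x = y : Finset G) : Set G) := by simp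
  rw [hset, Measure.real, uniformOn_univ, Measure.count_apply_finset, hcard, ENNReal.toReal_div,
    ENNReal.toReal_natCast, ENNReal.toReal_natCast, Nat.cast_mul, div_mul_cancel_right₀ hne]

lemma measureReal_infinitePi_forall_mem {ι α : Type*} {X : ι → Type*} [∀ i, MeasurableSpace (X i)]
    (μ : ∀ i, Measure (X i)) [∀ i, IsProbabilityMeasure (μ i)] {e : α → ι}
    (he : Function.Injective e) (J : Finset α) {A : ∀ a, Set (X (e a))}
    (hA : ∀ a, MeasurableSet (A a)) :
    (Measure.infinitePi μ).real {ω | ∀ a ∈ J, ω (e a) ∈ A a} = ∏ a ∈ J, (μ (e a)).real (A a) := by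
  have hindep : iIndepFun (fun a (ω : ∀ i, X i) => ω (e a)) (Measure.infinitePi μ) :=
    (iIndepFun_infinitePi (X := fun _ x => x) fun _ => measurable_id).precomp he
  have hset : {ω : ∀ i, X i | ∀ a ∈ J, ω (e a) ∈ A a} =
      ⋂ a ∈ J, (fun ω : ∀ i, X i => ω (e a)) ⁻¹' A a := by
    ext; simp
  rw [hset, Measure.real, hindep.meas_biInter fun a _ => ⟨A a, hA a, rfl⟩, ENNReal.toReal_prod]
  exact prod_congr rfl fun a _ =>
    (measurePreserving_eval_infinitePi μ (e a)).measureReal_preimage (hA a).nullMeasurableSet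

variable {Ω ι : Type*} [MeasurableSpace Ω] {P : Measure Ω} [IsProbabilityMeasure P]

lemma memLp_indicator_one {p : ENNReal} {A : Set Ω} (hA : MeasurableSet A) :
    MemLp (A.indicator (1 : Ω → ℝ)) p P :=
  (memLp_const 1).indicator hA

lemma covariance_indicator_one {A B : Set Ω} (hA : MeasurableSet A) (hB : MeasurableSet B) :
    cov[A.indicator 1, B.indicator 1; P] = P.real (A ∩ B) - P.real A * P.real B := by
  rw [covariance_eq_sub (memLp_indicator_one hA) (memLp_indicator_one hB),
    ← Set.inter_indicator_one, integral_indicator_one (hA.inter hB), integral_indicator_one hA,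
    integral_indicator_one hB]

lemma variance_sum_indicator_one_le {S : Finset ι} {E : ι → Set Ω}
    (hE : ∀ x ∈ S, MeasurableSet (E x))
    (hneg : ∀ x ∈ S, ∀ y ∈ S, x ≠ y → P.real (E x ∩ E y) ≤ P.real (E x) * P.real (E y)) :
    Var[∑ x ∈ S, (E x).indicator (1 : Ω → ℝ); P] ≤ ∑ x ∈ S, P.real (E x) := by
  classical
  rw [variance_sum' fun x hx => memLp_indicator_one (hE x hx)]
  refine sum_le_sum fun x hx => ?_
  calc ∑ y ∈ S, cov[(E x).indicator 1, (E y).indicator 1; P]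
      ≤ ∑ y ∈ S, if x = y then P.real (E x) else 0 := by
        refine sum_le_sum fun y hy => ?_
        rw [covariance_indicator_one (hE x hx) (hE y hy)]
        split_ifs with hxy
        · subst hxy
          rw [Set.inter_self]
          exact sub_le_self _ (mul_self_nonneg _)
        · exact sub_nonpos.mpr (hneg x hx y hy hxy)
    _ = P.real (E x) := by rw [sum_ite_eq, if_pos hx]

lemma measureReal_add_le_sum_indicator_one_le {S : Finset ι} {E : ι → Set Ω}
    (hE : ∀ x ∈ S, MeasurableSet (E x))
    (hneg : ∀ x ∈ S, ∀ y ∈ S, x ≠ y → P.real (E x ∩ E y) ≤ P.real (E x) * P.real (E y))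
    {M t : ℝ} (hM : ∑ x ∈ S, P.real (E x) ≤ M) (ht : 0 < t) :
    P.real {ω | M + t ≤ ∑ x ∈ S, (E x).indicator (1 : Ω → ℝ) ω} ≤ M / t ^ 2 := by
  set N : Ω → ℝ := ∑ x ∈ S, (E x).indicator 1 with hN
  have hmean : P[N] = ∑ x ∈ S, P.real (E x) := by
    simp only [hN, Finset.sum_apply]
    rw [integral_finsetSum _ fun x hx => (memLp_indicator_one (hE x hx)).integrable one_le_two]
    exact sum_congr rfl fun x hx => integral_indicator_one (hE x hx)
  have hsub : {ω | M + t ≤ ∑ x ∈ S, (E x).indicator (1 : Ω → ℝ) ω} ⊆ {ω | t ≤ |N ω - P[N]|} := by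
    intro ω hω
    rw [Set.mem_ofPred_eq, ← Finset.sum_apply, ← hN] at hω
    have hdev : t ≤ N ω - P[N] := by rw [hmean]; linarith
    exact hdev.trans (le_abs_self _)
  calc P.real {ω | M + t ≤ ∑ x ∈ S, (E x).indicator (1 : Ω → ℝ) ω}
      ≤ P.real {ω | t ≤ |N ω - P[N]|} := measureReal_mono hsub
    _ ≤ Var[N; P] / t ^ 2 := ENNReal.toReal_le_of_le_ofReal
        (div_nonneg (variance_nonneg _ _) (sq_nonneg _))
        (meas_ge_le_variance_div_sq
          (memLp_finsetSum' _ fun x hx => memLp_indicator_one (hE x hx)) ht)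
    _ ≤ M / t ^ 2 := by
        gcongr
        exact (variance_sum_indicator_one_le hE hneg).trans hM

lemma exists_forall_notMem_of_hasSum_lt_one [Countable ι] {B : ι → Set Ω} {c : ι → ℝ} {s : ℝ}
    (hB : ∀ i, P.real (B i) ≤ c i) (hc : HasSum c s) (hs : s < 1) : ∃ ω, ∀ i, ω ∉ B i := by
  have hlt : P (⋃ i, B i) < 1 := calc
    P (⋃ i, B i) ≤ ∑' i, P (B i) := measure_iUnion_le B
    _ ≤ ∑' i, ENNReal.ofReal (c i) := ENNReal.tsum_le_tsum fun i => by
        rw [← ofReal_measureReal]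
        exact ENNReal.ofReal_le_ofReal (hB i)
    _ = ENNReal.ofReal s := by
        rw [← ENNReal.ofReal_tsum_of_nonneg (fun i => measureReal_nonneg.trans (hB i)) hc.summable,
          hc.tsum_eq]
    _ < 1 := ENNReal.ofReal_lt_one.mpr hs
  have hne : (⋃ i, B i) ≠ Set.univ := fun h => by simp [h] at hlt
  simpa [Set.mem_iUnion] using (Set.ne_univ_iff_exists_notMem _).mp hne

end FiniteProbability

section RandomMatrix

variable {F ι κ : Type*} [Field F] [Fintype κ]

lemma mulVec_surjective_of_linearIndependent_row [Finite ι] {A : Matrix ι κ F}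
    (hA : LinearIndependent F A.row) : Function.Surjective A.mulVec := by
  have := Fintype.ofFinite ι
  have hrange : LinearMap.range A.mulVecLin = ⊤ :=
    Submodule.eq_top_of_finrank_eq (by
      rw [Module.finrank_fintype_fun_eq_card]; exact hA.rank_matrix)
  exact LinearMap.range_eq_top.mp hrange

variable [Fintype ι] [Fintype F] [MeasurableSpace F] [MeasurableSingletonClass F]

lemma measureReal_uniformOn_univ_mulVec_eq {A : Matrix ι κ F} (hA : LinearIndependent F A.row)
    (b : ι → F) :
    (uniformOn (Set.univ : Set (κ → F))).real {r | A *ᵥ r = b} =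
      ((Fintype.card F : ℝ) ^ Fintype.card ι)⁻¹ := by
  classical
  have := measureReal_uniformOn_univ_fiber (f := A.mulVecLin.toAddMonoidHom)
    (mulVec_surjective_of_linearIndependent_row hA) b
  simpa using this

end RandomMatrix

section SystematicCode

variable {F : Type*} [Field F] {k n : ℕ}

/-- The matrix `G_n` whose rows are the first `n` terms of the row sequence `R`. The sequence is
indexed from `0`, so that `R j` is the paper's `R_{j+1}`. -/
def generatorMatrix (R : ℕ → Fin k → F) (n : ℕ) : Matrix (Fin n) (Fin k) F :=
  Matrix.of fun j => R j

/-- The linear code of length `n` generated by the row sequence `R`, as the set of its codewords. -/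
def code (R : ℕ → Fin k → F) (n : ℕ) : Set (Fin n → F) :=
  Set.range (generatorMatrix R n).mulVec

/-- A row sequence is systematic if its first `k` rows form the identity matrix. -/
def IsSystematic (R : ℕ → Fin k → F) : Prop :=
  ∀ i : Fin k, R i = Pi.single i 1

/-- The systematic part of a word of length `n ≥ k`: its first `k` coordinates. -/
def systematicPart (h : k ≤ n) (x : Fin n → F) : Fin k → F :=
  fun i => x (Fin.castLE h i)

/-- The systematic row sequence that continues the identity matrix with the rows `ω j`, `j ≥ k`;
the first `k` terms of `ω` are discarded. -/
def systematicRows (ω : ℕ → Fin k → F) : ℕ → Fin k → F :=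
  fun j => if h : j < k then Pi.single ⟨j, h⟩ 1 else ω j

/-- The parity positions of a systematic code of dimension `k` and length `n`. -/
def parityPositions (k n : ℕ) : Finset (Fin n) := {j | k ≤ j}

lemma isSystematic_systematicRows (ω : ℕ → Fin k → F) : IsSystematic (systematicRows ω) :=
  fun i => by simp [systematicRows]

lemma IsSystematic.systematicPart_mulVec {R : ℕ → Fin k → F} (hR : IsSystematic R) (h : k ≤ n)
    (m : Fin k → F) : systematicPart h (generatorMatrix R n *ᵥ m) = m := by
  funext i
  change R i ⬝ᵥ m = m i
  rw [hR i, single_one_dotProduct]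

lemma IsSystematic.mulVec_injective {R : ℕ → Fin k → F} (hR : IsSystematic R) (h : k ≤ n) :
    Function.Injective (generatorMatrix R n).mulVec :=
  Function.LeftInverse.injective (hR.systematicPart_mulVec h)

lemma IsSystematic.mem_code_iff_mulVec_eq {R : ℕ → Fin k → F} (hR : IsSystematic R) (h : k ≤ n)
    {x : Fin n → F} : x ∈ code R n ↔ generatorMatrix R n *ᵥ systematicPart h x = x := by
  refine ⟨?_, fun hx => ⟨_, hx⟩⟩
  rintro ⟨m, rfl⟩
  rw [hR.systematicPart_mulVec h]

lemma mem_code_systematicRows_iff (h : k ≤ n) (ω : ℕ → Fin k → F) {x : Fin n → F} :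
    x ∈ code (systematicRows ω) n ↔
      ∀ j ∈ parityPositions k n, systematicPart h x ⬝ᵥ ω j = x j := by
  rw [(isSystematic_systematicRows ω).mem_code_iff_mulVec_eq h, funext_iff]
  refine forall_congr' fun j => ?_
  change systematicRows ω j ⬝ᵥ systematicPart h x = x j ↔ _
  by_cases hj : (j : ℕ) < k
  · simp [systematicRows, parityPositions, systematicPart, hj]
  · simp [systematicRows, parityPositions, hj, not_lt.mp hj, dotProduct_comm]

lemma card_parityPositions (k n : ℕ) : #(parityPositions k n) = n - k := by
  rw [parityPositions, ← card_map Fin.valEmbedding,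
    show ({j : Fin n | k ≤ j} : Finset (Fin n)).map Fin.valEmbedding = Ico k n by
      ext j; simp [Fin.exists_iff, and_comm]]
  exact Nat.card_Ico k n

end SystematicCode

section RandomCode

/-- The law of an infinite sequence of independent rows, each uniform on `κ → F`. -/
noncomputable abbrev uniformRows (κ F : Type*) [MeasurableSpace F] : Measure (ℕ → κ → F) :=
  Measure.infinitePi fun _ => uniformOn Set.univ

variable {F : Type*} [Field F] [MeasurableSpace F] [MeasurableSingletonClass F] {k n : ℕ}

lemma measureReal_uniformRows_forall_mem_code [Fintype F] {ι : Type*} [Fintype ι] (h : k ≤ n)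
    {x : ι → Fin n → F} (hx : LinearIndependent F fun i => systematicPart h (x i)) :
    (uniformRows (Fin k) F).real {ω | ∀ i, x i ∈ code (systematicRows ω) n} =
      (((Fintype.card F : ℝ) ^ Fintype.card ι)⁻¹) ^ (n - k) := by
  set A : Matrix ι (Fin k) F := Matrix.of fun i => systematicPart h (x i)
  have hset : {ω : ℕ → Fin k → F | ∀ i, x i ∈ code (systematicRows ω) n} =
      {ω | ∀ j ∈ parityPositions k n, ω j ∈ {r | A *ᵥ r = fun i => x i j}} := by
    ext ω
    simp only [mem_code_systematicRows_iff h, Set.mem_ofPred_eq, funext_iff]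
    exact ⟨fun H j hj i => H i j hj, fun H i j hj => H j hj i⟩
  rw [hset, measureReal_infinitePi_forall_mem _ Fin.val_injective _ fun _ => .of_discrete,
    prod_congr rfl fun j _ => measureReal_uniformOn_univ_mulVec_eq (A := A) hx _, prod_const,
    card_parityPositions]

lemma measurableSet_mem_code [Finite F] (h : k ≤ n) (x : Fin n → F) :
    MeasurableSet {ω : ℕ → Fin k → F | x ∈ code (systematicRows ω) n} := by
  simp only [mem_code_systematicRows_iff h]
  measurability

lemma measureReal_mem_code [Fintype F] (h : k ≤ n) {x : Fin n → F}
    (hx : systematicPart h x ≠ 0) :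
    (uniformRows (Fin k) F).real {ω | x ∈ code (systematicRows ω) n} =
      (Fintype.card F : ℝ)⁻¹ ^ (n - k) := by
  have := measureReal_uniformRows_forall_mem_code h (x := fun _ : Unit => x)
    (linearIndependent_unique_iff.mpr hx)
  simpa using this

lemma measureReal_mem_code_inter [Finite F] (h : k ≤ n) {x y : Fin n → F}
    (hxy : LinearIndependent F ![systematicPart h x, systematicPart h y]) :
    (uniformRows (Fin k) F).real
        ({ω | x ∈ code (systematicRows ω) n} ∩ {ω | y ∈ code (systematicRows ω) n}) =
      (uniformRows (Fin k) F).real {ω | x ∈ code (systematicRows ω) n} *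
        (uniformRows (Fin k) F).real {ω | y ∈ code (systematicRows ω) n} := by
  have := Fintype.ofFinite F
  have hpair : LinearIndependent F fun i => systematicPart h (![x, y] i) := by
    convert hxy using 1
    ext i; fin_cases i <;> rfl
  have hinter := measureReal_uniformRows_forall_mem_code h hpair
  simp only [Fin.forall_fin_two, Fintype.card_fin] at hinter
  rw [measureReal_mem_code h (hxy.ne_zero 0), measureReal_mem_code h (hxy.ne_zero 1), ← mul_pow,
    ← mul_inv, ← sq]
  exact hinter

end RandomCode

section BinaryCode

variable {k n i : ℕ}

/-- The number `w_{i,n}` of messages that the code generated by `R` encodes as words of weight `i`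
and length `n`. -/
def weightDist (R : ℕ → Fin k → ZMod 2) (n i : ℕ) : ℕ :=
  #{m | wt (generatorMatrix R n *ᵥ m) = i}

/-- The words of length `n` and weight `i` whose systematic part is nonzero: the candidates for
codewords of weight `i > 0`. -/
def candidateWords (h : k ≤ n) (i : ℕ) : Finset (Fin n → ZMod 2) :=
  {x | wt x = i ∧ systematicPart h x ≠ 0}

/-- The expected weight distribution `C(n,i) 2^{k-n}` of a random binary linear `[n, k]` code. -/
noncomputable def expectedWeightDist (k n i : ℕ) : ℝ :=
  n.choose i * 2 ^ ((k : ℤ) - n)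

lemma expectedWeightDist_nonneg (k n i : ℕ) : 0 ≤ expectedWeightDist k n i := by
  unfold expectedWeightDist
  positivity

lemma expectedWeightDist_eq_choose_mul (h : k ≤ n) (i : ℕ) :
    expectedWeightDist k n i = n.choose i * (2⁻¹ : ℝ) ^ (n - k) := by
  rw [expectedWeightDist, inv_pow, ← zpow_natCast, ← _root_.zpow_neg,
    Nat.cast_sub h, neg_sub]

lemma card_wt_eq_le_choose (n i : ℕ) : #{x : Fin n → ZMod 2 | wt x = i} ≤ n.choose i := by
  have hsupport : Function.Injective fun (x : Fin n → ZMod 2) => univ.filter fun j => x j = 1 := by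
    intro x y hxy
    funext j
    have hj : x j = 1 ↔ y j = 1 := by simpa using Finset.ext_iff.mp hxy j
    exact (by decide : ∀ u v : ZMod 2, (u = 1 ↔ v = 1) → u = v) _ _ hj
  calc #{x : Fin n → ZMod 2 | wt x = i} ≤ #(powersetCard i (univ : Finset (Fin n))) :=
        card_le_card_of_injOn _ (fun x hx =>
          mem_powersetCard.mpr ⟨subset_univ _, (mem_filter.mp (mem_coe.mp hx)).2⟩) hsupport.injOn
    _ = n.choose i := by rw [card_powersetCard, card_univ, Fintype.card_fin]

lemma card_candidateWords_le_choose (h : k ≤ n) (i : ℕ) : #(candidateWords h i) ≤ n.choose i :=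
  (card_le_card (monotone_filter_right _ fun _ _ hx => hx.1)).trans (card_wt_eq_le_choose n i)

lemma IsSystematic.weightDist_le_choose {R : ℕ → Fin k → ZMod 2} (hR : IsSystematic R)
    (h : k ≤ n) (i : ℕ) : weightDist R n i ≤ n.choose i :=
  (card_le_card_of_injOn _ (fun m hm => by simpa using hm) (hR.mulVec_injective h).injOn).trans
    (card_wt_eq_le_choose n i)

open Classical in
lemma IsSystematic.weightDist_eq_card {R : ℕ → Fin k → ZMod 2} (hR : IsSystematic R)
    (h : k ≤ n) (hi : 0 < i) : weightDist R n i = #{x ∈ candidateWords h i | x ∈ code R n} := by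
  refine card_bij (fun m _ => generatorMatrix R n *ᵥ m) (fun m hm => ?_)
    (fun m _ m' _ hmm' => hR.mulVec_injective h hmm') fun x hx => ?_
  · have hwt : wt (generatorMatrix R n *ᵥ m) = i := (mem_filter.mp hm).2
    have hm0 : m ≠ 0 := by
      rintro rfl
      exact hi.ne (by simpa [wt] using hwt)
    simpa [candidateWords, code, hwt, hR.systematicPart_mulVec h] using hm0
  · obtain ⟨hx, m, rfl⟩ := mem_filter.mp hx
    exact ⟨m, by simpa [candidateWords] using (mem_filter.mp hx).2.1, rfl⟩

lemma weightDist_systematicRows_eq_sum (h : k ≤ n) (hi : 0 < i) (ω : ℕ → Fin k → ZMod 2) :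
    (weightDist (systematicRows ω) n i : ℝ) = ∑ x ∈ candidateWords h i,
      {ω | x ∈ code (systematicRows ω) n}.indicator (1 : (ℕ → Fin k → ZMod 2) → ℝ) ω := by
  classical
  simp [(isSystematic_systematicRows ω).weightDist_eq_card h hi, Set.indicator_apply]

lemma measureReal_mem_code_of_mem_candidateWords (h : k ≤ n) {x : Fin n → ZMod 2}
    (hx : x ∈ candidateWords h i) :
    (uniformRows (Fin k) (ZMod 2)).real {ω | x ∈ code (systematicRows ω) n} = 2⁻¹ ^ (n - k) := by
  simpa using measureReal_mem_code h (mem_filter.mp hx).2.2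

lemma linearIndependent_pair_zmod_two {V : Type*} [AddCommGroup V] [Module (ZMod 2) V] {a b : V}
    (ha : a ≠ 0) (hb : b ≠ 0) (hab : a ≠ b) : LinearIndependent (ZMod 2) ![a, b] := by
  rw [LinearIndependent.pair_iff' ha]
  intro c hc
  obtain rfl | rfl := (by decide : ∀ c : ZMod 2, c = 0 ∨ c = 1) c
  · exact hb (by rw [← hc, zero_smul])
  · exact hab (by rw [← hc, one_smul])

lemma measureReal_mem_code_inter_le (h : k ≤ n) {x y : Fin n → ZMod 2}
    (hx : systematicPart h x ≠ 0) (hy : systematicPart h y ≠ 0) (hxy : x ≠ y) :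
    (uniformRows (Fin k) (ZMod 2)).real
        ({ω | x ∈ code (systematicRows ω) n} ∩ {ω | y ∈ code (systematicRows ω) n}) ≤
      (uniformRows (Fin k) (ZMod 2)).real {ω | x ∈ code (systematicRows ω) n} *
        (uniformRows (Fin k) (ZMod 2)).real {ω | y ∈ code (systematicRows ω) n} := by
  by_cases hpart : systematicPart h x = systematicPart h y
  · have hempty : {ω : ℕ → Fin k → ZMod 2 | x ∈ code (systematicRows ω) n} ∩
        {ω | y ∈ code (systematicRows ω) n} = ∅ := by
      refine Set.eq_empty_of_forall_notMem fun ω ⟨hxω, hyω⟩ => hxy ?_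
      have hR := isSystematic_systematicRows ω
      rw [← (hR.mem_code_iff_mulVec_eq h).mp hxω, hpart, (hR.mem_code_iff_mulVec_eq h).mp hyω]
    rw [hempty, measureReal_empty]
    positivity
  · exact (measureReal_mem_code_inter h (linearIndependent_pair_zmod_two hx hy hpart)).le

lemma sum_measureReal_mem_code_le (h : k ≤ n) (i : ℕ) :
    ∑ x ∈ candidateWords h i,
        (uniformRows (Fin k) (ZMod 2)).real {ω | x ∈ code (systematicRows ω) n} ≤
      expectedWeightDist k n i := by
  rw [sum_congr rfl fun x hx => measureReal_mem_code_of_mem_candidateWords h hx, sum_const,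
    nsmul_eq_mul, expectedWeightDist_eq_choose_mul h]
  gcongr
  exact card_candidateWords_le_choose h i

lemma measureReal_weightDist_ne_zero_le (h : k ≤ n) (hi : 0 < i) :
    (uniformRows (Fin k) (ZMod 2)).real {ω | weightDist (systematicRows ω) n i ≠ 0} ≤
      expectedWeightDist k n i := by
  have hsub : {ω : ℕ → Fin k → ZMod 2 | weightDist (systematicRows ω) n i ≠ 0} ⊆
      ⋃ x ∈ candidateWords h i, {ω | x ∈ code (systematicRows ω) n} := by
    classical
    intro ω hω
    rw [Set.mem_ofPred_eq, (isSystematic_systematicRows ω).weightDist_eq_card h hi,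
      card_ne_zero] at hω
    obtain ⟨x, hx⟩ := hω
    exact Set.mem_biUnion (mem_coe.mpr (mem_filter.mp hx).1) (mem_filter.mp hx).2
  exact (measureReal_mono hsub (measure_ne_top _ _)).trans
    ((measureReal_biUnion_finset_le _ _).trans (sum_measureReal_mem_code_le h i))

lemma measureReal_add_le_weightDist_le (h : k ≤ n) (hi : 0 < i) {t : ℝ} (ht : 0 < t) :
    (uniformRows (Fin k) (ZMod 2)).real
        {ω | expectedWeightDist k n i + t ≤ weightDist (systematicRows ω) n i} ≤
      expectedWeightDist k n i / t ^ 2 := by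
  simp only [weightDist_systematicRows_eq_sum h hi]
  exact measureReal_add_le_sum_indicator_one_le (fun x _ => measurableSet_mem_code h x)
    (fun x hx y hy => measureReal_mem_code_inter_le h (mem_filter.mp hx).2.2 (mem_filter.mp hy).2.2)
    (sum_measureReal_mem_code_le h i) ht

end BinaryCode

section Estimates

lemma one_add_inv_le_exp_two_mul_sqrt_sub_sqrt {x y : ℝ} (hx : 0 ≤ x) (hxy : x + 1 ≤ y) :
    1 + 1 / y ≤ Real.exp (2 * (√y - √x)) := by
  have hy : 0 < y := by linarith
  have hle : √x ≤ √y := Real.sqrt_le_sqrt (by linarith)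
  have hone : 1 ≤ √y := Real.one_le_sqrt.mpr (by linarith)
  have hgap : 1 ≤ (√y - √x) * (2 * √y) := by
    nlinarith [Real.sq_sqrt hx, Real.sq_sqrt hy.le]
  have hsqrt : √y ≤ y := by nlinarith [Real.sq_sqrt hy.le]
  have hinv : 1 / y ≤ 2 * (√y - √x) := by
    rw [div_le_iff₀ hy]
    nlinarith [mul_le_mul_of_nonneg_left hsqrt (sub_nonneg.mpr hle)]
  linarith [Real.add_one_le_exp (2 * (√y - √x))]

lemma pow_mul_le_two_pow_of_le_div_logb {x : ℝ} (hx : 1 ≤ x) {c i d : ℕ}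
    (hi : (i : ℝ) ≤ d / (c * Real.logb 2 x)) : x ^ (c * i) ≤ 2 ^ d := by
  have hlog : 0 ≤ Real.logb 2 x := Real.logb_nonneg one_lt_two hx
  have hexp : Real.logb 2 x * (c * i : ℕ) ≤ d := by
    have := mul_le_of_le_div₀ (Nat.cast_nonneg d) (by positivity) hi
    push_cast
    linarith
  calc x ^ (c * i) = (2 : ℝ) ^ (Real.logb 2 x * (c * i : ℕ)) := by
        rw [Real.rpow_mul zero_le_two, Real.rpow_logb two_pos (by norm_num) (by linarith),
          Real.rpow_natCast]
    _ ≤ (2 : ℝ) ^ (d : ℝ) := Real.rpow_le_rpow_of_exponent_le one_le_two hexp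
    _ = 2 ^ d := Real.rpow_natCast _ _

lemma div_sq_add_le_one_div_four_mul {a M x : ℝ} (ha : 0 < a) (hM : 0 ≤ M) (hx : 0 < x) :
    M / (a + M / x) ^ 2 ≤ 1 / (4 * (a / x)) := by
  rw [div_le_div_iff₀ (by positivity) (by positivity), one_mul]
  calc M * (4 * (a / x)) = 4 * a * (M / x) := by ring
    _ ≤ (a + M / x) ^ 2 := four_mul_le_sq_add a (M / x)

variable {k n i : ℕ}

lemma expectedWeightDist_le_of_le_div_logb (hkn : k ≤ n) (hn : 2 ≤ n) (hi : 0 < i)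
    (hid : (i : ℝ) ≤ ((n : ℝ) - k) / (55 * Real.logb 2 n)) :
    expectedWeightDist k n i ≤ 1 / (8 * (n : ℝ) ^ 3) := by
  have hnR : (2 : ℝ) ≤ n := by exact_mod_cast hn
  have hpow : (n : ℝ) ^ (55 * i) ≤ 2 ^ (n - k) :=
    pow_mul_le_two_pow_of_le_div_logb (by linarith) (by rw [Nat.cast_sub hkn]; exact_mod_cast hid)
  rw [expectedWeightDist_eq_choose_mul hkn, inv_pow, ← div_eq_mul_inv,
    div_le_div_iff₀ (by positivity) (by positivity), one_mul]
  calc (n.choose i : ℝ) * (8 * (n : ℝ) ^ 3) ≤ (n : ℝ) ^ i * ((n : ℝ) ^ 3 * (n : ℝ) ^ 3) := by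
        gcongr
        · exact_mod_cast Nat.choose_le_pow n i
        · calc (8 : ℝ) = 2 ^ 3 := by norm_num
            _ ≤ (n : ℝ) ^ 3 := by gcongr
    _ = (n : ℝ) ^ (i + 6) := by ring
    _ ≤ (n : ℝ) ^ (55 * i) := pow_le_pow_right₀ (by linarith) (by omega)
    _ ≤ 2 ^ (n - k) := hpow

end Estimates

section PseudorandomWeights

variable {k n i : ℕ}

/-- The two requirements on the number of codewords of weight `i` and length `n`: it vanishes for
small `i > 0`, and it exceeds the expected number by at most the allowed error. -/
def HasPseudorandomWeight (R : ℕ → Fin k → ZMod 2) (n i : ℕ) : Prop :=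
  (0 < i → (i : ℝ) ≤ ((n : ℝ) - k) / (55 * Real.logb 2 n) → weightDist R n i = 0) ∧
    (weightDist R n i : ℝ) ≤
      2 * (n : ℝ) ^ 4 + expectedWeightDist k n i * Real.exp (2 * (√n - √k))

lemma IsSystematic.hasPseudorandomWeight_of_lt {R : ℕ → Fin k → ZMod 2} (hR : IsSystematic R)
    (h : k ≤ n) (hi : n < i) : HasPseudorandomWeight R n i := by
  have hzero : weightDist R n i = 0 :=
    Nat.eq_zero_of_le_zero ((hR.weightDist_le_choose h i).trans_eq (Nat.choose_eq_zero_of_lt hi))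
  have := expectedWeightDist_nonneg k n i
  refine ⟨fun _ _ => hzero, ?_⟩
  rw [hzero, Nat.cast_zero]
  positivity

lemma IsSystematic.hasPseudorandomWeight_zero {R : ℕ → Fin k → ZMod 2} (hR : IsSystematic R)
    (h : k ≤ n) (hn : 0 < n) : HasPseudorandomWeight R n 0 := by
  have hle : (weightDist R n 0 : ℝ) ≤ 1 := by
    exact_mod_cast (hR.weightDist_le_choose h 0).trans_eq (Nat.choose_zero_right n)
  have hn4 : (1 : ℝ) ≤ (n : ℝ) ^ 4 := one_le_pow₀ (by exact_mod_cast hn)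
  have := mul_nonneg (expectedWeightDist_nonneg k n 0) (Real.exp_nonneg (2 * (√n - √k)))
  exact ⟨fun hi => absurd hi (lt_irrefl 0), by linarith⟩

lemma IsSystematic.hasPseudorandomWeight_self {R : ℕ → Fin k → ZMod 2} (hR : IsSystematic R)
    (i : ℕ) : HasPseudorandomWeight R k i := by
  constructor
  · intro hi hid
    rw [sub_self, zero_div] at hid
    exact absurd hi (by exact_mod_cast hid.not_gt)
  · have hle : (weightDist R k i : ℝ) ≤ k.choose i := by
      exact_mod_cast hR.weightDist_le_choose le_rfl i
    rw [expectedWeightDist_eq_choose_mul le_rfl]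
    simp only [Nat.sub_self, pow_zero, sub_self, mul_zero, Real.exp_zero, mul_one]
    linarith [pow_nonneg (Nat.cast_nonneg (α := ℝ) k) 4]

lemma measureReal_lt_weightDist_le (hkn : k < n) (hi : 0 < i) :
    (uniformRows (Fin k) (ZMod 2)).real
        {ω | 2 * (n : ℝ) ^ 4 + expectedWeightDist k n i * Real.exp (2 * (√n - √k)) <
          weightDist (systematicRows ω) n i} ≤ 1 / (8 * (n : ℝ) ^ 3) := by
  have hn : (0 : ℝ) < n := by exact_mod_cast (Nat.zero_le k).trans_lt hkn
  set M := expectedWeightDist k n i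
  have hM : 0 ≤ M := expectedWeightDist_nonneg k n i
  have hexp : M * (1 + 1 / n) ≤ M * Real.exp (2 * (√n - √k)) :=
    mul_le_mul_of_nonneg_left (one_add_inv_le_exp_two_mul_sqrt_sub_sqrt (Nat.cast_nonneg k)
      (by exact_mod_cast hkn)) hM
  have hsub : {ω : ℕ → Fin k → ZMod 2 | 2 * (n : ℝ) ^ 4 + M * Real.exp (2 * (√n - √k)) <
      weightDist (systematicRows ω) n i} ⊆
      {ω | M + (2 * (n : ℝ) ^ 4 + M / n) ≤ weightDist (systematicRows ω) n i} := by
    intro ω hω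
    have hsplit : M * (1 + 1 / n) = M + M / n := by ring
    rw [Set.mem_ofPred_eq] at hω ⊢
    linarith
  calc _ ≤ (uniformRows (Fin k) (ZMod 2)).real
          {ω | M + (2 * (n : ℝ) ^ 4 + M / n) ≤ weightDist (systematicRows ω) n i} :=
        measureReal_mono hsub (measure_ne_top _ _)
    _ ≤ M / (2 * (n : ℝ) ^ 4 + M / n) ^ 2 :=
        measureReal_add_le_weightDist_le hkn.le hi (by positivity)
    _ ≤ 1 / (4 * (2 * (n : ℝ) ^ 4 / n)) := div_sq_add_le_one_div_four_mul (by positivity) hM hn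
    _ = 1 / (8 * (n : ℝ) ^ 3) := by field_simp; norm_num

lemma measureReal_low_weightDist_ne_zero_le (hkn : k ≤ n) (hn : 2 ≤ n) (hi : 0 < i) :
    (uniformRows (Fin k) (ZMod 2)).real
        {ω | (i : ℝ) ≤ ((n : ℝ) - k) / (55 * Real.logb 2 n) ∧
          weightDist (systematicRows ω) n i ≠ 0} ≤ 1 / (8 * (n : ℝ) ^ 3) := by
  by_cases hid : (i : ℝ) ≤ ((n : ℝ) - k) / (55 * Real.logb 2 n)
  · simp only [hid, true_and]
    exact (measureReal_weightDist_ne_zero_le hkn hi).trans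
      (expectedWeightDist_le_of_le_div_logb hkn hn hi hid)
  · simp only [hid, false_and, Set.ofPred_false, measureReal_empty]
    positivity

lemma measureReal_not_hasPseudorandomWeight_le (hkn : k < n) (hn : 2 ≤ n) (hi : 0 < i) :
    (uniformRows (Fin k) (ZMod 2)).real
        {ω | ¬ HasPseudorandomWeight (systematicRows ω) n i} ≤ 1 / (4 * (n : ℝ) ^ 3) := by
  have hsub : {ω : ℕ → Fin k → ZMod 2 | ¬ HasPseudorandomWeight (systematicRows ω) n i} ⊆
      {ω | (i : ℝ) ≤ ((n : ℝ) - k) / (55 * Real.logb 2 n) ∧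
        weightDist (systematicRows ω) n i ≠ 0} ∪
      {ω | 2 * (n : ℝ) ^ 4 + expectedWeightDist k n i * Real.exp (2 * (√n - √k)) <
        weightDist (systematicRows ω) n i} := by
    intro ω hω
    rw [Set.mem_ofPred_eq, HasPseudorandomWeight, not_and_or, not_le] at hω
    exact hω.imp_left fun hlow => ⟨by_contra fun h => hlow fun _ hid => absurd hid h,
      fun hzero => hlow fun _ _ => hzero⟩
  calc _ ≤ 1 / (8 * (n : ℝ) ^ 3) + 1 / (8 * (n : ℝ) ^ 3) :=
        (measureReal_mono hsub (measure_ne_top _ _)).trans ((measureReal_union_le _ _).trans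
          (add_le_add (measureReal_low_weightDist_ne_zero_le hkn.le hn hi)
            (measureReal_lt_weightDist_le hkn hi)))
    _ = 1 / (4 * (n : ℝ) ^ 3) := by ring

lemma measureReal_exists_not_hasPseudorandomWeight_le (hkn : k < n) (hn : 2 ≤ n) :
    (uniformRows (Fin k) (ZMod 2)).real
        {ω | ∃ i ∈ Icc 1 n, ¬ HasPseudorandomWeight (systematicRows ω) n i} ≤
      1 / 4 * (1 / (n : ℝ) ^ 2) := by
  have hset : {ω : ℕ → Fin k → ZMod 2 |
      ∃ i ∈ Icc 1 n, ¬ HasPseudorandomWeight (systematicRows ω) n i} =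
      ⋃ i ∈ Icc 1 n, {ω | ¬ HasPseudorandomWeight (systematicRows ω) n i} := by
    ext; simp
  have hn0 : (n : ℝ) ≠ 0 := by positivity
  calc _ ≤ ∑ i ∈ Icc 1 n, (uniformRows (Fin k) (ZMod 2)).real
          {ω | ¬ HasPseudorandomWeight (systematicRows ω) n i} :=
        hset ▸ measureReal_biUnion_finset_le _ _
    _ ≤ ∑ _i ∈ Icc 1 n, 1 / (4 * (n : ℝ) ^ 3) := sum_le_sum fun i hi =>
        measureReal_not_hasPseudorandomWeight_le hkn hn (mem_Icc.mp hi).1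
    _ = 1 / 4 * (1 / (n : ℝ) ^ 2) := by
        rw [sum_const, Nat.card_Icc, Nat.add_sub_cancel, nsmul_eq_mul]
        field_simp

lemma exists_forall_hasPseudorandomWeight_of_mem_Icc (k : ℕ) : ∃ ω : ℕ → Fin k → ZMod 2,
    ∀ n, k < n → 2 ≤ n → ∀ i ∈ Icc 1 n, HasPseudorandomWeight (systematicRows ω) n i := by
  let bad (n : ℕ) : Set (ℕ → Fin k → ZMod 2) :=
    {ω | (k < n ∧ 2 ≤ n) ∧ ∃ i ∈ Icc 1 n, ¬ HasPseudorandomWeight (systematicRows ω) n i}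
  have hbad : ∀ n, (uniformRows (Fin k) (ZMod 2)).real (bad n) ≤ 1 / 4 * (1 / (n : ℝ) ^ 2) := by
    intro n
    by_cases hn : k < n ∧ 2 ≤ n
    · simpa only [bad, hn, true_and] using
        measureReal_exists_not_hasPseudorandomWeight_le hn.1 hn.2
    · simp only [bad, hn, false_and, Set.ofPred_false, measureReal_empty]
      positivity
  have hsum : 1 / 4 * (Real.pi ^ 2 / 6) < 1 := by nlinarith [Real.pi_lt_four, Real.pi_pos]
  obtain ⟨ω, hω⟩ :=
    exists_forall_notMem_of_hasSum_lt_one hbad (hasSum_zeta_two.mul_left (1 / 4)) hsum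
  refine ⟨ω, fun n hkn hn i hi => ?_⟩
  by_contra hfail
  exact hω n ⟨⟨hkn, hn⟩, i, hi, hfail⟩

lemma exists_isSystematic_forall_hasPseudorandomWeight (k : ℕ) : ∃ R : ℕ → Fin k → ZMod 2,
    IsSystematic R ∧ ∀ n, max k 2 ≤ n → ∀ i, HasPseudorandomWeight R n i := by
  obtain ⟨ω, hω⟩ := exists_forall_hasPseudorandomWeight_of_mem_Icc k
  have hR := isSystematic_systematicRows ω
  refine ⟨systematicRows ω, hR, fun n hn i => ?_⟩
  obtain ⟨hkn, hn2⟩ := max_le_iff.mp hn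
  obtain rfl | hlt := hkn.eq_or_lt
  · exact hR.hasPseudorandomWeight_self i
  obtain rfl | hi := i.eq_zero_or_pos
  · exact hR.hasPseudorandomWeight_zero hkn (by omega)
  obtain hin | hin := le_or_gt i n
  · exact hω n hlt hn2 i (mem_Icc.mpr ⟨hi, hin⟩)
  · exact hR.hasPseudorandomWeight_of_lt hkn hin

end PseudorandomWeights

theorem stmt15 (k : ℕ) (hk : 1 ≤ k) :
    ∃ R : ℕ → (Fin k → ZMod 2),
      (∀ i : Fin k, R (i : ℕ) = fun j => if j = i then 1 else 0) ∧
      ∀ n : ℕ, max k 2 ≤ n →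
        (∀ i : ℕ, 0 < i → (i : ℝ) ≤ ((n : ℝ) - (k : ℝ)) / (55 * Real.logb 2 n) →
          (Finset.univ.filter fun m : Fin k → ZMod 2 =>
            wt (fun j : Fin n => ∑ l, R (j : ℕ) l * m l) = i).card = 0) ∧
        (∀ i : ℕ,
          ((Finset.univ.filter fun m : Fin k → ZMod 2 =>
            wt (fun j : Fin n => ∑ l, R (j : ℕ) l * m l) = i).card : ℝ) ≤
          2 * (n : ℝ) ^ 4 + (n.choose i : ℝ) * (2 : ℝ) ^ ((k : ℤ) - (n : ℤ)) *
            Real.exp (2 * (Real.sqrt n - Real.sqrt k))) := by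
  obtain ⟨R, hR, hweight⟩ := exists_isSystematic_forall_hasPseudorandomWeight k
  refine ⟨R, fun i => ?_, fun n hn => ⟨fun i => (hweight n hn i).1, fun i => (hweight n hn i).2⟩⟩
  funext j
  rw [hR i, Pi.single_apply]
end

section
/- (Error bound of Theorem 2, weakly capacity-achieving rateless codes.) For every real δ > 0 there exist a constant c > 0 and an integer k₀ such that for every k ≥ k₀ there exist an encoding function E : (ZMod 2)^k → (ℕ → ZMod 2) and, for every n ≥ 1, a decoding function D_n : (ZMod 2)^n → (ZMod 2)^k, with the following property: for every p ∈ (0, 1/2) with 1 − H(p) > δ, every integer n ≥ k/(1 − H(p) − δ), and every message m ∈ (ZMod 2)^k, the BSC(p)-probability of the set {η ∈ (ZMod 2)^n : D_n((E m)|_n + η) ≠ m} is at most 2^{−c·k}, where (E m)|_n ∈ (ZMod 2)^n denotes the first n bits of E m. -/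
open Finset

/-- Probability, over a vector of n i.i.d. Bernoulli(p) bits, of a set of binary vectors. -/
noncomputable def bscProb {n : ℕ} (p : ℝ) (E : Finset (Fin n → ZMod 2)) : ℝ :=
  ∑ η ∈ E, p ^ wt η * (1 - p) ^ (n - wt η)

/-- Binary entropy function (base-2 logarithms). -/
noncomputable def binH (p : ℝ) : ℝ := -p * Real.logb 2 p - (1 - p) * Real.logb 2 (1 - p)

/-!
The code is a random linear one: message `m` is sent as the sequence `G i ⬝ᵥ m`, where the rows
`G i` are independent and uniform; the decoder picks a message whose codeword is nearest in Hamming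
distance, and so does not need to know `p`. By linearity, whether noise `x` can cause an error does
not depend on the message sent: `x` has to be confusable, i.e. some nonzero codeword `y` has
`wt (y + x) ≤ wt x`.

Each prefix of a nonzero codeword is uniform, so among the vectors of length `n` and weight `w` the
expected fraction of confusable ones is at most `2 ^ (k - n)` times the volume of the Hamming ball
of radius `w`. The first-moment method with weights `(1 - r) ^ 2 * r ^ n * r ^ w` yields one `G`
obeying these bounds, up to a factor `((1 - r) * r ^ n) ^ (-2)`, for all `n` and `w` simultaneously.
Treating each weight separately is what makes `G` independent of `p`.

For given `p ≤ 1 / 2`, the vectors in the ball of radius `w` are at least as likely as those of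
weight `w`, so its volume is at most the reciprocal of `P = p ^ w * (1 - p) ^ (n - w)`. With
`min 1 z ≤ z ^ s`, the error probability is therefore bounded by `M ^ s`, where
`M = 2 ^ (k - n) * ((1 - r) * r ^ n) ^ (-2)`, times the sum of `P ^ (1 - s)` over all noise vectors,
which is `(p ^ (1 - s) + (1 - p) ^ (1 - s)) ^ n`. The base of the latter power is at most
`exp (s * h(p) + 16 * s ^ 2)`, where `h` is the entropy in nats and the quadratic term is uniform in
`p`, so a choice of `s` and `-log r` as small multiples of `δ` leaves an exponentially small bound.
-/

open MeasureTheory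
open scoped ENNReal

/-! ### First-moment method -/

theorem exists_forall_mul_le_lintegral {α Ω : Type*} [Countable α] [MeasurableSpace Ω]
    {μ : Measure Ω} [IsProbabilityMeasure μ] {X : α → Ω → ℝ≥0∞} (hX : ∀ a, AEMeasurable (X a) μ)
    {c : α → ℝ≥0∞} (hc : ∑' a, c a ≤ 1) :
    ∃ ω, ∀ a, c a * X a ω ≤ ∫⁻ ω, X a ω ∂μ := by
  have hmeas (a : α) : AEMeasurable (fun ω ↦ c a * X a ω / ∫⁻ ω, X a ω ∂μ) μ :=
    ((hX a).const_mul _).div_const _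
  have hmean : ∫⁻ ω, ∑' a, c a * X a ω / ∫⁻ ω, X a ω ∂μ ∂μ ≤ 1 := by
    rw [lintegral_tsum hmeas]
    refine (ENNReal.tsum_le_tsum fun a ↦ ?_).trans hc
    simp only [div_eq_mul_inv]
    rw [lintegral_mul_const'' _ ((hX a).const_mul _), lintegral_const_mul'' _ (hX a), mul_assoc]
    exact mul_le_of_le_one_right' (ENNReal.mul_inv_le_one _)
  obtain ⟨ω, hω⟩ := exists_le_lintegral (AEMeasurable.tsum hmeas (L := .unconditional α))
  refine ⟨ω, fun a ↦ ?_⟩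
  have hterm : c a * X a ω / ∫⁻ ω, X a ω ∂μ ≤ 1 := (ENNReal.le_tsum a).trans (hω.trans hmean)
  rwa [ENNReal.div_le_iff_le_mul (.inr ENNReal.one_ne_top) (.inr one_ne_zero), one_mul] at hterm

theorem tsum_one_sub_sq_mul_pow_mul_pow {r : ℝ≥0∞} (hr : r < 1) :
    ∑' a : ℕ × ℕ, (1 - r) ^ 2 * (r ^ a.1 * r ^ a.2) = 1 := by
  have h0 : 1 - r ≠ 0 := (tsub_pos_of_lt hr).ne'
  have htop : 1 - r ≠ ⊤ := ENNReal.sub_ne_top ENNReal.one_ne_top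
  rw [ENNReal.tsum_mul_left, ENNReal.tsum_prod (f := fun n w ↦ r ^ n * r ^ w)]
  simp only [ENNReal.tsum_mul_left, ENNReal.tsum_mul_right, ENNReal.tsum_geometric]
  rw [← sq, ← mul_pow, ENNReal.mul_inv_cancel h0 htop, one_pow]

section CountingVariable

variable {β Ω : Type*} {P : Ω → β → Prop} [∀ ω, DecidablePred (P ω)]

theorem card_filter_eq_sum_indicator (A : Finset β) (ω : Ω) :
    (#{x ∈ A | P ω x} : ℝ≥0∞) = ∑ x ∈ A, {ω | P ω x}.indicator 1 ω := by
  classical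
  simp only [card_filter, Nat.cast_sum, Nat.cast_ite, Nat.cast_one, Nat.cast_zero,
    Set.indicator_apply, Set.mem_ofPred_eq, Pi.one_apply]

variable [MeasurableSpace Ω]

theorem measurable_card_filter (A : Finset β) (hP : ∀ x, MeasurableSet {ω | P ω x}) :
    Measurable fun ω ↦ (#{x ∈ A | P ω x} : ℝ≥0∞) := by
  simp only [card_filter_eq_sum_indicator]
  exact Finset.measurable_fun_sum _ fun x _ ↦ measurable_one.indicator (hP x)

theorem lintegral_card_filter {μ : Measure Ω} (A : Finset β)
    (hP : ∀ x, MeasurableSet {ω | P ω x}) :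
    ∫⁻ ω, #{x ∈ A | P ω x} ∂μ = ∑ x ∈ A, μ {ω | P ω x} := by
  simp only [card_filter_eq_sum_indicator]
  rw [lintegral_finsetSum _ fun x _ ↦ measurable_one.indicator (hP x)]
  simp only [lintegral_indicator_one (hP _)]

end CountingVariable

/-! ### Random linear codes -/

section RandomLinearCode

variable {F ι : Type*} [Field F] [Fintype ι]

/-- The length-`n` prefix of the rateless linear encoder with generator rows `G 0, G 1, …`. -/
def prefixEncoder (G : ℕ → ι → F) (n : ℕ) : (ι → F) →ₗ[F] (Fin n → F) :=
  Matrix.mulVecLin (Matrix.of fun j : Fin n ↦ G j)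

theorem setOf_exists_prefixEncoder_add_mem {n : ℕ} (B : Finset (Fin n → F)) (x : Fin n → F) :
    {G : ℕ → ι → F | ∃ d ≠ 0, prefixEncoder G n d + x ∈ B} =
      ⋃ d : {d : ι → F // d ≠ 0},
        {G | prefixEncoder G n d ∈ B.map (Equiv.subRight x).toEmbedding} := by
  ext G
  simp

section Measurability

variable [Countable F] [MeasurableSpace F] [DiscreteMeasurableSpace F]

theorem measurable_prefixEncoder (n : ℕ) (d : ι → F) :
    Measurable fun G : ℕ → ι → F ↦ prefixEncoder G n d :=
  measurable_pi_lambda _ fun j ↦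
    (Measurable.of_discrete (f := fun v : ι → F ↦ v ⬝ᵥ d)).comp (measurable_pi_apply (j : ℕ))

theorem measurableSet_exists_prefixEncoder_add_mem {n : ℕ} (B : Finset (Fin n → F))
    (x : Fin n → F) : MeasurableSet {G : ℕ → ι → F | ∃ d ≠ 0, prefixEncoder G n d + x ∈ B} := by
  rw [setOf_exists_prefixEncoder_add_mem]
  exact .iUnion fun d ↦ measurable_prefixEncoder n d.1 (Finset.measurableSet _)

end Measurability

variable [Fintype F] [DecidableEq ι]

theorem card_mul_card_dotProduct_eq [DecidableEq F] {d : ι → F} (hd : d ≠ 0) (b : F) :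
    Fintype.card F * #{v : ι → F | v ⬝ᵥ d = b} = Fintype.card (ι → F) := by
  let f : (ι → F) →+ F := AddMonoidHom.mk' (· ⬝ᵥ d) fun v w ↦ add_dotProduct v w d
  have hf : Function.Surjective f := by
    obtain ⟨i, hi⟩ := Function.ne_iff.1 hd
    exact fun b ↦ ⟨Pi.single i (b / d i), by simp [f, div_mul_cancel₀ b hi]⟩
  have hfiber (c : F) : #{v : ι → F | v ⬝ᵥ d = c} = #{v : ι → F | v ⬝ᵥ d = b} :=
    AddMonoidHom.card_fiber_eq_of_mem_range f (hf c) (hf b)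
  calc Fintype.card F * #{v : ι → F | v ⬝ᵥ d = b} = ∑ c : F, #{v : ι → F | v ⬝ᵥ d = c} := by
        simp only [hfiber, sum_const, smul_eq_mul, card_univ]
    _ = Fintype.card (ι → F) :=
        (card_eq_sum_card_fiberwise fun _ _ ↦ mem_coe.2 (mem_univ _)).symm

section Measure

variable [MeasurableSpace F]

variable (F ι) in
/-- The law of a generator matrix with infinitely many independent uniform rows. -/
noncomputable def randomGenerator : Measure (ℕ → ι → F) :=
  Measure.infinitePi fun _ ↦ (PMF.uniformOfFintype (ι → F)).toMeasure

instance : IsProbabilityMeasure (randomGenerator F ι) :=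
  inferInstanceAs (IsProbabilityMeasure (Measure.infinitePi _))

variable [DiscreteMeasurableSpace F]

theorem uniformOfFintype_dotProduct_eq {d : ι → F} (hd : d ≠ 0) (b : F) :
    (PMF.uniformOfFintype (ι → F)).toMeasure {v | v ⬝ᵥ d = b} = (Fintype.card F : ℝ≥0∞)⁻¹ := by
  classical
  have hcard : Fintype.card {v : ι → F | v ⬝ᵥ d = b} = #{v : ι → F | v ⬝ᵥ d = b} :=
    Fintype.card_subtype _
  have hmul : (Fintype.card F : ℝ≥0∞) * #{v : ι → F | v ⬝ᵥ d = b} = Fintype.card (ι → F) := by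
    exact_mod_cast card_mul_card_dotProduct_eq hd b
  have hpos : (#{v : ι → F | v ⬝ᵥ d = b} : ℝ≥0∞) ≠ 0 := by
    refine right_ne_zero_of_mul (a := (Fintype.card F : ℝ≥0∞)) ?_
    rw [hmul]
    exact_mod_cast Fintype.card_ne_zero
  rw [PMF.toMeasure_uniformOfFintype_apply _ MeasurableSet.of_discrete, hcard, ← hmul,
    ENNReal.div_eq_inv_mul, ENNReal.mul_inv (.inr (ENNReal.natCast_ne_top _)) (.inr hpos),
    mul_assoc, ENNReal.inv_mul_cancel hpos (ENNReal.natCast_ne_top _), mul_one]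

theorem randomGenerator_dotProduct_eq {d : ι → F} (hd : d ≠ 0) (s : Finset ℕ) (z : ℕ → F) :
    randomGenerator F ι {G | ∀ i ∈ s, G i ⬝ᵥ d = z i} = (Fintype.card F : ℝ≥0∞)⁻¹ ^ #s := by
  have hpi : {G : ℕ → ι → F | ∀ i ∈ s, G i ⬝ᵥ d = z i} =
      Set.pi s fun i ↦ {v | v ⬝ᵥ d = z i} := rfl
  rw [hpi, randomGenerator, Measure.infinitePi_pi _ fun _ _ ↦ MeasurableSet.of_discrete]
  simp only [uniformOfFintype_dotProduct_eq hd, prod_const]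

theorem randomGenerator_prefixEncoder_mem {d : ι → F} (hd : d ≠ 0) {n : ℕ}
    (B : Finset (Fin n → F)) :
    randomGenerator F ι {G | prefixEncoder G n d ∈ B} = #B * (Fintype.card F : ℝ≥0∞)⁻¹ ^ n := by
  have hfiber (z : Fin n → F) : randomGenerator F ι ((prefixEncoder · n d) ⁻¹' {z}) =
      (Fintype.card F : ℝ≥0∞)⁻¹ ^ n := by
    obtain ⟨z, rfl⟩ := Fin.val_injective.surjective_comp_right z
    have hset : (prefixEncoder · n d) ⁻¹' {z ∘ Fin.val} =
        {G : ℕ → ι → F | ∀ i ∈ range n, G i ⬝ᵥ d = z i} := by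
      ext G
      simp [prefixEncoder, funext_iff, Fin.forall_iff, Matrix.mulVec]
    rw [hset, randomGenerator_dotProduct_eq hd, card_range]
  calc randomGenerator F ι {G | prefixEncoder G n d ∈ B}
      = ∑ z ∈ B, randomGenerator F ι ((prefixEncoder · n d) ⁻¹' {z}) :=
        (sum_measure_preimage_singleton B fun z _ ↦
          measurable_prefixEncoder n d (MeasurableSet.singleton z)).symm
    _ = #B * (Fintype.card F : ℝ≥0∞)⁻¹ ^ n := by simp only [hfiber, sum_const, nsmul_eq_mul]

theorem randomGenerator_exists_prefixEncoder_add_mem_le {n : ℕ} (B : Finset (Fin n → F))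
    (x : Fin n → F) :
    randomGenerator F ι {G | ∃ d ≠ 0, prefixEncoder G n d + x ∈ B} ≤
      Fintype.card (ι → F) * (#B * (Fintype.card F : ℝ≥0∞)⁻¹ ^ n) := by
  classical
  rw [setOf_exists_prefixEncoder_add_mem]
  refine (measure_iUnion_fintype_le _ _).trans ?_
  rw [sum_congr rfl fun d _ ↦ randomGenerator_prefixEncoder_mem d.2 _, sum_const, nsmul_eq_mul,
    card_map]
  gcongr
  exact Fintype.card_subtype_le _

end Measure

theorem exists_generator_forall_mul_card_le {α : Type*} [Countable α] [DecidableEq F] (n : α → ℕ)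
    (A B : ∀ a, Finset (Fin (n a) → F)) {c : α → ℝ≥0∞} (hc : ∑' a, c a ≤ 1) :
    ∃ G : ℕ → ι → F, ∀ a, c a * #{x ∈ A a | ∃ d ≠ 0, prefixEncoder G (n a) d + x ∈ B a} ≤
      #(A a) * (Fintype.card (ι → F) * (#(B a) * (Fintype.card F : ℝ≥0∞)⁻¹ ^ n a)) := by
  let _ : MeasurableSpace F := ⊤
  have : DiscreteMeasurableSpace F := ⟨fun _ ↦ trivial⟩
  have hmeas (a : α) (x : Fin (n a) → F) :
      MeasurableSet {G : ℕ → ι → F | ∃ d ≠ 0, prefixEncoder G (n a) d + x ∈ B a} :=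
    measurableSet_exists_prefixEncoder_add_mem (B a) x
  obtain ⟨G, hG⟩ := exists_forall_mul_le_lintegral (μ := randomGenerator F ι)
    (fun a ↦ (measurable_card_filter (A a) (hmeas a)).aemeasurable) hc
  refine ⟨G, fun a ↦ (hG a).trans ?_⟩
  rw [lintegral_card_filter _ (hmeas a), ← nsmul_eq_mul]
  exact sum_le_card_nsmul _ _ _ fun x _ ↦
    randomGenerator_exists_prefixEncoder_add_mem_le (B a) x

end RandomLinearCode

/-! ### Rényi entropy -/

theorem exp_le_one_add_add_sq_mul_exp {x : ℝ} (hx : 0 ≤ x) :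
    Real.exp x ≤ 1 + x + x ^ 2 * Real.exp x := by
  have hfirst : Real.exp x - 1 ≤ x * Real.exp x := by
    have h := mul_le_mul_of_nonneg_right (Real.one_sub_le_exp_neg x) (Real.exp_pos x).le
    rw [← Real.exp_add, neg_add_cancel, Real.exp_zero] at h
    linarith
  linarith [mul_le_mul_of_nonneg_left hfirst hx]

theorem sq_le_eight_mul_exp_half {u : ℝ} (hu : 0 ≤ u) : u ^ 2 ≤ 8 * Real.exp (u / 2) := by
  linarith [Real.quadratic_le_exp_of_nonneg (div_nonneg hu two_pos.le)]

theorem rpow_one_sub_le {q s : ℝ} (hq : 0 < q) (hq1 : q ≤ 1) (hs : 0 ≤ s) (hs2 : s ≤ 1 / 2) :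
    q ^ (1 - s) ≤ q + s * Real.negMulLog q + 8 * s ^ 2 := by
  set u := -Real.log q with hu
  have hu0 : 0 ≤ u := neg_nonneg.2 (Real.log_nonpos hq.le hq1)
  have hqu : q = Real.exp (-u) := by rw [hu, neg_neg, Real.exp_log hq]
  have hpow : q ^ (1 - s) = q * Real.exp (s * u) := by
    rw [hqu, ← Real.exp_mul, ← Real.exp_add]
    ring_nf
  -- As `s ≤ 1 / 2`, a factor `q ^ (1 / 2)` remains to absorb `(log q) ^ 2` uniformly in `q`.
  have hquad : u ^ 2 * q ^ (1 - s) ≤ 8 := by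
    calc u ^ 2 * q ^ (1 - s) ≤ 8 * Real.exp (u / 2) * Real.exp (-(u / 2)) := by
          rw [hqu, ← Real.exp_mul]
          gcongr
          · exact sq_le_eight_mul_exp_half hu0
          · nlinarith
      _ = 8 := by rw [mul_assoc, ← Real.exp_add, add_neg_cancel, Real.exp_zero, mul_one]
  calc q ^ (1 - s) = q * Real.exp (s * u) := hpow
    _ ≤ q * (1 + s * u + (s * u) ^ 2 * Real.exp (s * u)) := by
        gcongr
        exact exp_le_one_add_add_sq_mul_exp (mul_nonneg hs hu0)
    _ = q + s * Real.negMulLog q + s ^ 2 * (u ^ 2 * q ^ (1 - s)) := by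
        rw [hpow, Real.negMulLog, hu]
        ring
    _ ≤ q + s * Real.negMulLog q + 8 * s ^ 2 := by
        linarith [mul_le_mul_of_nonneg_left hquad (sq_nonneg s)]

theorem rpow_one_sub_add_le_exp_binEntropy {p s : ℝ} (hp : 0 < p) (hp1 : p < 1) (hs : 0 ≤ s)
    (hs2 : s ≤ 1 / 2) :
    p ^ (1 - s) + (1 - p) ^ (1 - s) ≤ Real.exp (s * Real.binEntropy p + 16 * s ^ 2) := by
  have h₁ := rpow_one_sub_le hp hp1.le hs hs2
  have h₂ := rpow_one_sub_le (sub_pos.2 hp1) (sub_le_self 1 hp.le) hs hs2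
  have h₃ := Real.add_one_le_exp (s * Real.binEntropy p + 16 * s ^ 2)
  rw [Real.binEntropy_eq_negMulLog_add_negMulLog_one_sub] at h₃ ⊢
  linarith

theorem binH_eq_binEntropy_div (p : ℝ) : binH p = Real.binEntropy p / Real.log 2 := by
  rw [binH, Real.binEntropy, Real.logb, Real.logb, Real.log_inv, Real.log_inv]
  ring

/-! ### Hamming weight -/

theorem wt_le {n : ℕ} (x : Fin n → ZMod 2) : wt x ≤ n :=
  card_finset_fin_le _

theorem sum_pow_wt_mul_pow {R : Type*} [CommSemiring R] (n : ℕ) (a b : R) :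
    ∑ x : Fin n → ZMod 2, a ^ wt x * b ^ (n - wt x) = (a + b) ^ n := by
  let support (x : Fin n → ZMod 2) : Finset (Fin n) := {j | x j = 1}
  have hsupport : support.Bijective := by
    refine ⟨fun x y hxy ↦ funext fun j ↦ ?_, fun s ↦ ⟨fun j ↦ if j ∈ s then 1 else 0, ?_⟩⟩
    · have hj : x j = 1 ↔ y j = 1 := by simpa [support] using Finset.ext_iff.1 hxy j
      have bit_ext : ∀ a b : ZMod 2, (a = 1 ↔ b = 1) → a = b := by decide
      exact bit_ext _ _ hj
    · ext j
      simp [support]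
  rw [← Fin.sum_pow_mul_eq_add_pow a b, ← hsupport.sum_comp]
  rfl

/-- The binary vectors of length `n` and weight `w`. -/
def hammingSphere (n w : ℕ) : Finset (Fin n → ZMod 2) := {x | wt x = w}

/-- The binary vectors of length `n` and weight at most `w`. -/
def hammingBall (n w : ℕ) : Finset (Fin n → ZMod 2) := {x | wt x ≤ w}

theorem sum_comp_wt {R : Type*} [Semiring R] {n : ℕ} (E : Finset (Fin n → ZMod 2)) (f : ℕ → R) :
    ∑ x ∈ E, f (wt x) = ∑ w ∈ range (n + 1), #{x ∈ E | wt x = w} * f w := by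
  rw [← sum_fiberwise_of_maps_to' fun x _ ↦ mem_range.2 (Nat.lt_succ_of_le (wt_le x))]
  simp only [sum_const, nsmul_eq_mul]

theorem sum_comp_wt_le {n : ℕ} {E : Finset (Fin n → ZMod 2)} {f g : ℕ → ℝ}
    (hf : ∀ w ≤ n, 0 ≤ f w)
    (hE : ∀ w ≤ n, (#{x ∈ E | wt x = w} : ℝ) ≤ g w * #(hammingSphere n w)) :
    ∑ x ∈ E, f (wt x) ≤ ∑ x : Fin n → ZMod 2, g (wt x) * f (wt x) := by
  rw [sum_comp_wt, sum_comp_wt univ fun w ↦ g w * f w]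
  refine sum_le_sum fun w hw ↦ ?_
  have hwn : w ≤ n := Nat.lt_succ_iff.1 (mem_range.1 hw)
  calc #{x ∈ E | wt x = w} * f w ≤ g w * #(hammingSphere n w) * f w :=
        mul_le_mul_of_nonneg_right (hE w hwn) (hf w hwn)
    _ = #(hammingSphere n w) * (g w * f w) := by ring

/-! ### The Gallager bound -/

/-- The BSC(`p`)-probability of each single noise vector of length `n` and weight `w`. -/
noncomputable def bscMass (p : ℝ) (n w : ℕ) : ℝ := p ^ w * (1 - p) ^ (n - w)

theorem bscMass_pos {p : ℝ} (hp : 0 < p) (hp1 : p < 1) (n w : ℕ) : 0 < bscMass p n w :=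
  mul_pos (pow_pos hp w) (pow_pos (sub_pos.2 hp1) _)

theorem sum_bscMass_rpow {p : ℝ} (hp : 0 ≤ p) (hp1 : p ≤ 1) (n : ℕ) (t : ℝ) :
    ∑ x : Fin n → ZMod 2, bscMass p n (wt x) ^ t = (p ^ t + (1 - p) ^ t) ^ n := by
  have hq : 0 ≤ 1 - p := sub_nonneg.2 hp1
  simp only [bscMass, ← sum_pow_wt_mul_pow, Real.mul_rpow (pow_nonneg hp _) (pow_nonneg hq _),
    Real.rpow_pow_comm hp, Real.rpow_pow_comm hq]

theorem bscMass_anti {p : ℝ} (hp : 0 ≤ p) (hp2 : p ≤ 1 / 2) {n v w : ℕ} (hvw : v ≤ w)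
    (hwn : w ≤ n) : bscMass p n w ≤ bscMass p n v := by
  have hq : 0 ≤ 1 - p := by linarith
  have hpq : p ≤ 1 - p := by linarith
  calc bscMass p n w = p ^ v * p ^ (w - v) * (1 - p) ^ (n - w) := by
        rw [bscMass, ← pow_add, Nat.add_sub_cancel' hvw]
    _ ≤ p ^ v * (1 - p) ^ (w - v) * (1 - p) ^ (n - w) := by gcongr
    _ = bscMass p n v := by
        rw [bscMass, mul_assoc, ← pow_add]
        congr 2
        omega

theorem card_hammingBall_mul_bscMass_le_one {p : ℝ} (hp : 0 ≤ p) (hp2 : p ≤ 1 / 2) {n w : ℕ}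
    (hwn : w ≤ n) : #(hammingBall n w) * bscMass p n w ≤ 1 := by
  have hq : 0 ≤ 1 - p := by linarith
  calc #(hammingBall n w) * bscMass p n w = ∑ _x ∈ hammingBall n w, bscMass p n w := by
        rw [sum_const, nsmul_eq_mul]
    _ ≤ ∑ x ∈ hammingBall n w, bscMass p n (wt x) :=
        sum_le_sum fun x hx ↦ bscMass_anti hp hp2 (mem_filter.1 hx).2 hwn
    _ ≤ ∑ x : Fin n → ZMod 2, bscMass p n (wt x) :=
        sum_le_univ_sum_of_nonneg fun _ ↦ mul_nonneg (pow_nonneg hp _) (pow_nonneg hq _)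
    _ = 1 := by simp [bscMass, sum_pow_wt_mul_pow]

theorem bscProb_mono {p : ℝ} (hp : 0 ≤ p) (hp1 : p ≤ 1) {n : ℕ} {A B : Finset (Fin n → ZMod 2)}
    (hAB : A ⊆ B) : bscProb p A ≤ bscProb p B :=
  sum_le_sum_of_subset_of_nonneg hAB fun _ _ _ ↦
    mul_nonneg (pow_nonneg hp _) (pow_nonneg (sub_nonneg.2 hp1) _)

theorem le_rpow_of_le_one_of_le {a b s : ℝ} (ha1 : a ≤ 1) (hb : 0 ≤ b) (hab : a ≤ b)
    (hs : 0 ≤ s) (hs1 : s ≤ 1) : a ≤ b ^ s := by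
  rcases le_total b 1 with hb1 | hb1
  · exact hab.trans (Real.self_le_rpow_of_le_one hb hb1 hs1)
  · exact ha1.trans (Real.one_le_rpow hb1 hs)

theorem bscProb_le_rpow_mul_pow {n : ℕ} {E : Finset (Fin n → ZMod 2)} {M : ℝ} (hM : 0 ≤ M)
    (hE : ∀ w ≤ n, (#{x ∈ E | wt x = w} : ℝ) ≤ M * #(hammingBall n w) * #(hammingSphere n w))
    {p s : ℝ} (hp : 0 < p) (hp2 : p ≤ 1 / 2) (hs : 0 ≤ s) (hs1 : s ≤ 1) :
    bscProb p E ≤ M ^ s * (p ^ (1 - s) + (1 - p) ^ (1 - s)) ^ n := by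
  have hpos (w : ℕ) : 0 < bscMass p n w := bscMass_pos hp (by linarith) n w
  have hcard (w : ℕ) (hwn : w ≤ n) :
      (#{x ∈ E | wt x = w} : ℝ) ≤ (M / bscMass p n w) ^ s * #(hammingSphere n w) := by
    have hle : (#{x ∈ E | wt x = w} : ℝ) ≤ #(hammingSphere n w) := by
      exact_mod_cast card_le_card (filter_subset_filter _ (subset_univ E))
    rcases (Nat.cast_nonneg (α := ℝ) #(hammingSphere n w)).eq_or_lt with hN | hN
    · rwa [← hN, mul_zero, hN]
    rw [← div_le_iff₀ hN]
    refine le_rpow_of_le_one_of_le ((div_le_one hN).2 hle) (div_nonneg hM (hpos w).le) ?_ hs hs1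
    calc (#{x ∈ E | wt x = w} : ℝ) / #(hammingSphere n w) ≤ M * #(hammingBall n w) :=
          (div_le_iff₀ hN).2 (hE w hwn)
      _ ≤ M * (1 / bscMass p n w) := by
          gcongr
          exact (le_div_iff₀ (hpos w)).2 (card_hammingBall_mul_bscMass_le_one hp.le hp2 hwn)
      _ = M / bscMass p n w := mul_one_div _ _
  calc bscProb p E = ∑ x ∈ E, bscMass p n (wt x) := rfl
    _ ≤ ∑ x : Fin n → ZMod 2, (M / bscMass p n (wt x)) ^ s * bscMass p n (wt x) :=
        sum_comp_wt_le (fun w _ ↦ (hpos w).le) hcard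
    _ = M ^ s * ∑ x : Fin n → ZMod 2, bscMass p n (wt x) ^ (1 - s) := by
        rw [mul_sum]
        refine sum_congr rfl fun x _ ↦ ?_
        rw [Real.div_rpow hM (hpos _).le, Real.rpow_sub (hpos _), Real.rpow_one]
        ring
    _ = M ^ s * (p ^ (1 - s) + (1 - p) ^ (1 - s)) ^ n := by
        rw [sum_bscMass_rpow hp.le (by linarith)]

theorem bscProb_le_exp {n : ℕ} {E : Finset (Fin n → ZMod 2)} {M : ℝ} (hM : 0 < M)
    (hE : ∀ w ≤ n, (#{x ∈ E | wt x = w} : ℝ) ≤ M * #(hammingBall n w) * #(hammingSphere n w))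
    {p s : ℝ} (hp : 0 < p) (hp2 : p ≤ 1 / 2) (hs : 0 ≤ s) (hs2 : s ≤ 1 / 2) :
    bscProb p E ≤ Real.exp (s * (Real.log M + n * (Real.binEntropy p + 16 * s))) := by
  have hp1 : p < 1 := by linarith
  have : 0 ≤ 1 - p := by linarith
  calc bscProb p E ≤ M ^ s * (p ^ (1 - s) + (1 - p) ^ (1 - s)) ^ n :=
        bscProb_le_rpow_mul_pow hM.le hE hp hp2 hs (by linarith)
    _ ≤ M ^ s * Real.exp (s * Real.binEntropy p + 16 * s ^ 2) ^ n := by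
        gcongr
        exact rpow_one_sub_add_le_exp_binEntropy hp hp1 hs hs2
    _ = Real.exp (s * (Real.log M + n * (Real.binEntropy p + 16 * s))) := by
        rw [Real.rpow_def_of_pos hM, ← Real.exp_nat_mul, ← Real.exp_add]
        ring_nf

/-! ### Minimum-distance decoding -/

section Decoding

variable {ι : Type*} [Fintype ι] [DecidableEq ι]

/-- Noise vectors that some nonzero codeword fails to make heavier. They contain all noise vectors
on which minimum-distance decoding can fail, whichever message is sent. -/
def confusable (G : ℕ → ι → ZMod 2) (n : ℕ) : Finset (Fin n → ZMod 2) :=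
  {x | ∃ d ≠ 0, wt (prefixEncoder G n d + x) ≤ wt x}

/-- Minimum-distance decoding, with ties broken arbitrarily. In characteristic two the Hamming
distance of two vectors is the weight of their sum. -/
noncomputable def minDistDecoder (G : ℕ → ι → ZMod 2) (n : ℕ) (y : Fin n → ZMod 2) : ι → ZMod 2 :=
  Function.argmin fun m ↦ wt (prefixEncoder G n m + y)

theorem mem_confusable_of_minDistDecoder_ne {G : ℕ → ι → ZMod 2} {n : ℕ} {m : ι → ZMod 2}
    {x : Fin n → ZMod 2} (h : minDistDecoder G n (prefixEncoder G n m + x) ≠ m) :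
    x ∈ confusable G n := by
  set y := prefixEncoder G n m + x with hy
  refine mem_filter.2 ⟨mem_univ _, minDistDecoder G n y - m, sub_ne_zero.2 h, ?_⟩
  calc wt (prefixEncoder G n (minDistDecoder G n y - m) + x)
      = wt (prefixEncoder G n (minDistDecoder G n y) + y) := by
        rw [map_sub, ZModModule.sub_eq_add, hy, add_assoc]
    _ ≤ wt (prefixEncoder G n m + y) :=
        Function.argmin_le (fun m ↦ wt (prefixEncoder G n m + y)) m
    _ = wt x := by rw [hy, ← add_assoc, ZModModule.add_self, zero_add]

theorem bscProb_minDistDecoder_ne_le {p : ℝ} (hp : 0 ≤ p) (hp1 : p ≤ 1) (G : ℕ → ι → ZMod 2)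
    (n : ℕ) (m : ι → ZMod 2) :
    bscProb p {x | minDistDecoder G n (prefixEncoder G n m + x) ≠ m} ≤
      bscProb p (confusable G n) :=
  bscProb_mono hp hp1 fun _ hx ↦ mem_confusable_of_minDistDecoder_ne (mem_filter.1 hx).2

theorem exists_generator_forall_card_confusable_le {r : ℝ} (hr0 : 0 < r) (hr1 : r < 1) :
    ∃ G : ℕ → ι → ZMod 2, ∀ n, ∀ w ≤ n, (#{x ∈ confusable G n | wt x = w} : ℝ) ≤
      2 ^ Fintype.card ι / 2 ^ n / ((1 - r) * r ^ n) ^ 2 *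
        #(hammingBall n w) * #(hammingSphere n w) := by
  lift r to NNReal using hr0.le
  have hr1' : (r : ℝ≥0∞) < 1 := by exact_mod_cast hr1
  obtain ⟨G, hG⟩ := exists_generator_forall_mul_card_le (ι := ι) (Prod.fst : ℕ × ℕ → ℕ)
    (fun a ↦ hammingSphere a.1 a.2) (fun a ↦ hammingBall a.1 a.2)
    (tsum_one_sub_sq_mul_pow_mul_pow hr1').le
  refine ⟨G, fun n w hwn ↦ ?_⟩
  have hfilter : {x ∈ confusable G n | wt x = w} =
      {x ∈ hammingSphere n w | ∃ d ≠ 0, prefixEncoder G n d + x ∈ hammingBall n w} := by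
    ext x
    simp only [confusable, hammingSphere, hammingBall, mem_filter, mem_univ, true_and]
    constructor
    · rintro ⟨h, rfl⟩
      exact ⟨rfl, h⟩
    · rintro ⟨rfl, h⟩
      exact ⟨h, rfl⟩
  have h := ENNReal.toReal_mono (by finiteness) (hG (n, w))
  rw [← hfilter] at h
  simp only [ENNReal.toReal_mul, ENNReal.toReal_pow, ENNReal.toReal_inv, ENNReal.toReal_natCast,
    ENNReal.toReal_sub_of_le hr1'.le ENNReal.one_ne_top, ENNReal.toReal_one,
    ENNReal.coe_toReal, Fintype.card_fun, ZMod.card, Nat.cast_pow, Nat.cast_ofNat] at h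
  have hrw : (r : ℝ) ^ n ≤ r ^ w := pow_le_pow_of_le_one r.2 hr1.le hwn
  have hweight : 0 < ((1 - r) * r ^ n : ℝ) ^ 2 :=
    pow_pos (mul_pos (sub_pos.2 hr1) (pow_pos hr0 n)) 2
  calc (#{x ∈ confusable G n | wt x = w} : ℝ)
      ≤ #(hammingSphere n w) * (2 ^ Fintype.card ι * (#(hammingBall n w) * 2⁻¹ ^ n)) /
          ((1 - r) * r ^ n) ^ 2 := by
        rw [le_div_iff₀' hweight, mul_pow, sq ((r : ℝ) ^ n)]
        refine le_trans ?_ h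
        gcongr
    _ = _ := by
        rw [inv_pow]
        ring

theorem exists_generator_forall_bscProb_confusable_le {r : ℝ} (hr0 : 0 < r) (hr1 : r < 1) :
    ∃ G : ℕ → ι → ZMod 2, ∀ n p s, 0 < p → p ≤ 1 / 2 → 0 ≤ s → s ≤ 1 / 2 →
      bscProb p (confusable G n) ≤
        Real.exp (s * (Fintype.card ι * Real.log 2 - n * Real.log 2 - 2 * Real.log (1 - r)
          - 2 * n * Real.log r + n * (Real.binEntropy p + 16 * s))) := by
  obtain ⟨G, hG⟩ := exists_generator_forall_card_confusable_le (ι := ι) hr0 hr1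
  refine ⟨G, fun n p s hp hp2 hs hs2 ↦ ?_⟩
  have hr : 0 < 1 - r := sub_pos.2 hr1
  refine (bscProb_le_exp (by positivity) (hG n) hp hp2 hs hs2).trans_eq ?_
  rw [Real.log_div (by positivity) (by positivity), Real.log_div (by positivity) (by positivity),
    Real.log_pow, Real.log_pow, Real.log_pow, Real.log_mul hr.ne' (by positivity), Real.log_pow]
  push_cast
  ring_nf

end Decoding

theorem exists_forall_generator_bscProb_confusable_le_exp {ε : ℝ} (hε : 0 < ε) :
    ∃ c > 0, ∃ k₀ : ℕ, ∀ k ≥ k₀, ∃ G : ℕ → Fin k → ZMod 2, ∀ (p : ℝ) (n : ℕ), 0 < p → p ≤ 1 / 2 →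
      k * Real.log 2 ≤ n * (Real.log 2 - Real.binEntropy p - ε) →
        bscProb p (confusable G n) ≤ Real.exp (-c * k) := by
  set r := Real.exp (-(ε / 8))
  have hlogr : Real.log r = -(ε / 8) := Real.log_exp _
  have hr1 : r < 1 := Real.exp_lt_one_iff.2 (by linarith)
  set s := min (1 / 2) (ε / 64)
  have hs : 0 < s := lt_min (by norm_num) (by positivity)
  obtain ⟨k₀, hk₀⟩ := exists_nat_ge (-2 * Real.log (1 - r) / (ε / 4))
  refine ⟨s * (ε / 4), by positivity, k₀, fun k hk ↦ ?_⟩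
  obtain ⟨G, hG⟩ :=
    exists_generator_forall_bscProb_confusable_le (ι := Fin k) (r := r) (Real.exp_pos _) hr1
  refine ⟨G, fun p n hp hp2 hrate ↦ (hG n p s hp hp2 hs.le (min_le_left _ _)).trans ?_⟩
  have hkn : (k : ℝ) ≤ n := by
    refine le_of_mul_le_mul_right (hrate.trans ?_) (Real.log_pos one_lt_two)
    gcongr
    linarith [Real.binEntropy_nonneg hp.le (by linarith : p ≤ 1)]
  have hconst : -2 * Real.log (1 - r) ≤ n * (ε / 4) := by
    rw [← div_le_iff₀ (by positivity)]
    exact hk₀.trans ((Nat.cast_le.2 hk).trans hkn)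
  have hquad : n * (16 * s) ≤ n * (ε / 4) := by
    gcongr
    linarith [min_le_right (1 / 2) (ε / 64)]
  rw [Real.exp_le_exp, Fintype.card_fin, hlogr]
  calc _ ≤ s * -(n * (ε / 4)) := by
        refine mul_le_mul_of_nonneg_left ?_ hs.le
        linarith
    _ ≤ s * -(k * (ε / 4)) := by gcongr
    _ = -(s * (ε / 4)) * k := by ring

theorem stmt17 (δ : ℝ) (hδ : 0 < δ) :
    ∃ c : ℝ, 0 < c ∧ ∃ k₀ : ℕ, ∀ k : ℕ, k₀ ≤ k →
      ∃ E : (Fin k → ZMod 2) → (ℕ → ZMod 2),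
      ∃ D : (n : ℕ) → (Fin n → ZMod 2) → (Fin k → ZMod 2),
        ∀ p : ℝ, 0 < p → p < 1 / 2 → δ < 1 - binH p →
          ∀ n : ℕ, (k : ℝ) / (1 - binH p - δ) ≤ (n : ℝ) →
            ∀ m : Fin k → ZMod 2,
              bscProb p (Finset.univ.filter fun η : Fin n → ZMod 2 =>
                  D n ((fun j : Fin n => E m (j : ℕ)) + η) ≠ m) ≤
                (2 : ℝ) ^ (-c * (k : ℝ)) := by
  have hlog : 0 < Real.log 2 := Real.log_pos one_lt_two
  obtain ⟨c, hc, k₀, h⟩ :=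
    exists_forall_generator_bscProb_confusable_le_exp (mul_pos hδ hlog)
  refine ⟨c / Real.log 2, by positivity, k₀, fun k hk ↦ ?_⟩
  obtain ⟨G, hG⟩ := h k hk
  refine ⟨fun m i ↦ G i ⬝ᵥ m, minDistDecoder G, fun p hp hp2 hδp n hn m ↦ ?_⟩
  have hrate : k * Real.log 2 ≤ n * (Real.log 2 - Real.binEntropy p - δ * Real.log 2) := by
    rw [div_le_iff₀ (by linarith)] at hn
    calc k * Real.log 2 ≤ n * (1 - binH p - δ) * Real.log 2 := by gcongr
      _ = n * (Real.log 2 - Real.binEntropy p - δ * Real.log 2) := by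
          rw [binH_eq_binEntropy_div]
          field_simp
  calc bscProb p {η | minDistDecoder G n (prefixEncoder G n m + η) ≠ m}
      ≤ bscProb p (confusable G n) := bscProb_minDistDecoder_ne_le hp.le (by linarith) G n m
    _ ≤ Real.exp (-c * k) := hG p n hp hp2.le hrate
    _ = 2 ^ (-(c / Real.log 2) * k) := by
        rw [Real.rpow_def_of_pos two_pos]
        field_simp
end
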